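/- Let n ≥ 2 and fix 0 < δ < 1. Let β ≥ 0 and α be real numbers such that either (n−3)/2 < β < (n−1)/2 and α ≤ 2β − (n−3)/2, or β ≥ (n−1)/2 and α < β + 1. Then there is a constant C (depending on n, δ, α, β and χ) such that for every Schwartz function q on ℝⁿ and every r ∈ (1−δ, 1+δ), ‖ ∂_r ( χ(·) S_r(q)(·) ) ‖_{L²_{α−1}} ≤ C ‖q‖²_{W^{β,2}_2}. -/

import Mathlib

open MeasureTheory Filter Set
open scoped ENNReal RealInnerProductSpace

noncomputable section

abbrev Euc (n : ℕ) := EuclideanSpace ℝ (Fin n)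

/-- The Japanese bracket `⟨x⟩ = (1+|x|²)^{1/2}`. -/
def jap {n : ℕ} (x : Euc n) : ℝ := Real.sqrt (1 + ‖x‖ ^ 2)

/-- The Ewald sphere measure `σ_{rη}`: the `(n-1)`-dimensional Hausdorff measure restricted
to `Γ_r(η) = {ξ : |ξ - η/2| = r|η|/2}`. -/
def ewaldM (n : ℕ) (r : ℝ) (η : Euc n) : Measure (Euc n) :=
  (MeasureTheory.Measure.hausdorffMeasure ((n : ℝ) - 1)).restrict
    (Metric.sphere ((2 : ℝ)⁻¹ • η) (r * ‖η‖ / 2))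

/-- The Fourier transform `f̂(ξ) = ∫ e^{-iξ·x} f(x) dx`. -/
def ft {n : ℕ} (f : Euc n → ℂ) (ξ : Euc n) : ℂ :=
  ∫ x : Euc n, Complex.exp (-Complex.I * ((⟪ξ, x⟫ : ℝ) : ℂ)) * f x

/-- `⟨D⟩^β f`: inverse Fourier transform of `⟨ξ⟩^β f̂(ξ)`. -/
def besselD {n : ℕ} (β : ℝ) (f : Euc n → ℂ) (x : Euc n) : ℂ :=
  (((2 * Real.pi) ^ n : ℝ)⁻¹ : ℝ) •
    ∫ ξ : Euc n, Complex.exp (Complex.I * ((⟪ξ, x⟫ : ℝ) : ℂ)) *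
      (((jap ξ ^ β : ℝ) : ℂ) * ft f ξ)

/-- The weighted Sobolev norm `‖f‖_{W^{β,2}_δ} = ‖⟨·⟩^δ ⟨D⟩^β f‖_{L²}`. -/
def wSobNorm {n : ℕ} (β δ : ℝ) (f : Euc n → ℂ) : ℝ≥0∞ :=
  eLpNorm (fun x : Euc n => (jap x ^ δ : ℝ) • besselD β f x) 2 volume

/-- The spherical operator
`S_r(q)(η) = (2/(|η|(1+r))) ∫_{Γ_r(η)} q̂(ξ) q̂(η-ξ) dσ_{rη}(ξ)`. -/
def Sr {n : ℕ} (r : ℝ) (q : Euc n → ℂ) (η : Euc n) : ℂ :=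
  ((2 / (‖η‖ * (1 + r))) : ℝ) • ∫ ξ, ft q ξ * ft q (η - ξ) ∂(ewaldM n r η)

/-- `K_r(g₁,g₂)(η) = (1/|η|) ∫_{Γ_r(η)} |g₁(ξ)||g₂(η-ξ)| dσ_{rη}(ξ)`. -/
def Kr {n : ℕ} (r : ℝ) (g₁ g₂ : Euc n → ℂ) (η : Euc n) : ℝ :=
  ‖η‖⁻¹ * ∫ ξ, ‖g₁ ξ‖ * ‖g₂ (η - ξ)‖ ∂(ewaldM n r η)


/-- surface measure on the unit sphere -/
def sig (m : ℕ) : Measure (Euc (m+1)) :=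
  (Measure.hausdorffMeasure (m : ℝ)).restrict (Metric.sphere 0 1)

/-- the polar coordinate measure on the sphere -/
def tau (m : ℕ) : Measure (Euc (m+1)) :=
  ((volume : Measure (Euc (m+1))).toSphere).map Subtype.val

def insE {m : ℕ} (i : Fin (m+1)) (ε : ℝ) (y : Fin m → ℝ) : Euc (m+1) :=
  WithLp.toLp 2 (i.insertNth (α := fun _ => ℝ) ε y)

def nrm {m : ℕ} (x : Euc (m+1)) : Euc (m+1) := ‖x‖⁻¹ • x

lemma nrm_lip {m : ℕ} (x y : Euc (m+1)) (hx : 1 ≤ ‖x‖) (hy : 1 ≤ ‖y‖) :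
    ‖nrm x - nrm y‖ ≤ 2 * ‖x - y‖ := by
  have h : nrm x - nrm y = ‖x‖⁻¹ • (x - y) + (‖x‖⁻¹ - ‖y‖⁻¹) • y := by
    simp only [nrm, smul_sub, sub_smul]; abel
  rw [h]
  refine (norm_add_le _ _).trans ?_
  rw [norm_smul, norm_smul]
  have hx0 : 0 < ‖x‖ := by linarith
  have hy0 : 0 < ‖y‖ := by linarith
  have h1 : ‖(‖x‖⁻¹ : ℝ)‖ ≤ 1 := by
    rw [Real.norm_of_nonneg (by positivity)]
    exact inv_le_one_of_one_le₀ hx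
  have h2 : ‖(‖x‖⁻¹ - ‖y‖⁻¹ : ℝ)‖ * ‖y‖ ≤ ‖x - y‖ := by
    have : (‖x‖⁻¹ - ‖y‖⁻¹ : ℝ) = (‖y‖ - ‖x‖) * ‖x‖⁻¹ * ‖y‖⁻¹ := by field_simp
    rw [this, norm_mul, norm_mul, Real.norm_of_nonneg (inv_nonneg.2 hy0.le), mul_assoc,
      inv_mul_cancel₀ hy0.ne', mul_one]
    calc _ ≤ ‖x - y‖ * 1 := by
          gcongr
          rw [Real.norm_eq_abs, abs_sub_comm]
          exact abs_norm_sub_norm_le x y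
      _ = _ := mul_one _
  nlinarith [norm_nonneg (x - y)]

lemma insE_lip {m : ℕ} (i : Fin (m+1)) (ε : ℝ) :
    ∃ K : NNReal, LipschitzWith K (insE (m := m) i ε) := by
  obtain ⟨K, hK⟩ : ∃ K : NNReal, LipschitzWith K
      (fun x : Fin (m+1) → ℝ => (WithLp.toLp 2 x : Euc (m+1))) :=
    ⟨_, PiLp.lipschitzWith_toLp 2 (fun _ : Fin (m+1) => ℝ)⟩
  refine ⟨K * 1, hK.comp (g := fun y => i.insertNth (α := fun _ => ℝ) ε y) ?_⟩
  refine LipschitzWith.of_dist_le_mul fun y y' => ?_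
  rw [NNReal.coe_one, one_mul, dist_pi_le_iff dist_nonneg, Fin.forall_iff_succAbove i]
  constructor
  · simp
  · intro j; simpa using dist_le_pi_dist y y' j

lemma insE_norm_ge {m : ℕ} (i : Fin (m+1)) (ε : ℝ) (hε : |ε| = 1) (y : Fin m → ℝ) :
    1 ≤ ‖insE i ε y‖ := by
  have := PiLp.norm_apply_le (insE i ε y) i
  simpa [insE, hε] using this

lemma insE_norm_le {m : ℕ} (i : Fin (m+1)) (ε : ℝ) (hε : |ε| = 1) (y : Fin m → ℝ)
    (hy : ∀ j, |y j| ≤ 1) : ‖insE i ε y‖ ≤ (m+1 : ℝ) := by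
  rw [EuclideanSpace.norm_eq]
  have : ∀ j, ‖insE i ε y j‖ ^ 2 ≤ 1 := by
    rw [Fin.forall_iff_succAbove i]
    constructor
    · simp [insE, hε]
    · intro j; simpa [insE] using hy j
  calc √(∑ j, ‖insE i ε y j‖ ^ 2) ≤ √(∑ j : Fin (m+1), 1) := 
        Real.sqrt_le_sqrt (Finset.sum_le_sum fun j _ => this j)
    _ = √(m+1) := by simp
    _ ≤ m+1 := by
      rw [Real.sqrt_le_left (by positivity)]
      nlinarith [(Nat.cast_nonneg m : (0:ℝ) ≤ m)]

lemma insE_cone {m : ℕ} (i : Fin (m+1)) (ε : ℝ) (hε : |ε| = 1) (B : Set (Fin m → ℝ))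
    (hB : MeasurableSet B) : 
    volume B ≤ ENNReal.ofReal ((2*(m+1))^(m+1)) *
      volume {x : Euc (m+1) | ∃ s : ℝ, 0 < s ∧ s * (m+1) < 1 ∧ ∃ y ∈ B, x = s • insE i ε y} := by
  set a : ℝ := 1/(m+1) with ha
  have ha0 : 0 < a := by positivity
  have hεε : ε * ε = 1 := by rw [← abs_mul_abs_self, hε]; norm_num
  let D : Set (ℝ × (Fin m → ℝ)) := {p | ε * p.1 ∈ Ioo (a/2) a ∧ (ε * p.1)⁻¹ • p.2 ∈ B}
  have hD : MeasurableSet D := by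
    refine MeasurableSet.inter ?_ ?_
    · exact measurableSet_Ioo.preimage (by fun_prop)
    · exact hB.preimage (by fun_prop)
  let e := (MeasurableEquiv.piFinSuccAbove (fun _ : Fin (m+1) => ℝ) i)
  have he : MeasurePreserving e volume volume := volume_preserving_piFinSuccAbove (fun _ => ℝ) i
  have h2 : MeasurePreserving (WithLp.ofLp : Euc (m+1) → (Fin (m+1) → ℝ)) volume volume :=
    PiLp.volume_preserving_ofLp (Fin (m+1))
  have h3 : volume D ≤ volume {x : Euc (m+1) | ∃ s : ℝ, 0 < s ∧ s * (m+1) < 1 ∧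
      ∃ y ∈ B, x = s • insE i ε y} := by
    rw [← (he.comp h2).measure_preimage hD.nullMeasurableSet]
    refine measure_mono ?_
    rintro x ⟨hx1, hx2⟩
    refine ⟨ε * (e (WithLp.ofLp x)).1, by have := hx1.1; simp only [Function.comp] at this; linarith, ?_, _, hx2, ?_⟩
    · have := hx1.2
      simp only [Function.comp] at this
      rw [ha, lt_div_iff₀ (by positivity)] at this
      exact this
    · have h0 : ε * x i ≠ 0 := by
        have := hx1.1
        simp only [Function.comp] at this
        intro h
        have h5 : (e (WithLp.ofLp x)).1 = x i := rfl
        rw [h5, h] at this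
        linarith
      have h5 : (e (WithLp.ofLp x)).1 = x i := rfl
      have h6 : ∀ j, (e (WithLp.ofLp x)).2 j = x (i.succAbove j) := fun j => rfl
      ext j
      revert j
      rw [Fin.forall_iff_succAbove i]
      constructor
      · simp [insE, h5]
        linear_combination (-x i) * hεε
      · intro j
        simp only [insE, Function.comp, PiLp.smul_apply, Fin.insertNth_apply_succAbove,
          Pi.smul_apply, smul_eq_mul, h5, h6]
        rw [← mul_assoc, mul_inv_cancel₀ h0, one_mul]
  refine le_trans ?_ (mul_le_mul_right h3 _)
  have h4 : volume D = ∫⁻ u : ℝ, volume {y : Fin m → ℝ | (u, y) ∈ D} := by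
    rw [Measure.volume_eq_prod, Measure.prod_apply hD]; rfl
  have h5 : ∫⁻ u : ℝ in {u | ε * u ∈ Ioo (a/2) a}, ENNReal.ofReal ((a/2)^m) * volume B
      ≤ volume D := by
    have hms : MeasurableSet {u : ℝ | ε * u ∈ Ioo (a/2) a} :=
      measurableSet_Ioo.preimage (f := fun u : ℝ => ε * u) (by fun_prop)
    rw [h4, ← lintegral_indicator hms]
    refine lintegral_mono fun u => ?_
    by_cases hu : u ∈ {u | ε * u ∈ Ioo (a/2) a}
    · rw [indicator_of_mem hu]
      have : {y : Fin m → ℝ | (u, y) ∈ D} = (fun y => (ε * u)⁻¹ • y) ⁻¹' B := by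
        ext y; exact ⟨fun h => h.2, fun h => ⟨hu, h⟩⟩
      have hp : 0 < ε * u := by have := hu.1; linarith
      rw [this, Measure.addHaar_preimage_smul _ (inv_ne_zero hp.ne')]
      gcongr
      rw [Module.finrank_fintype_fun_eq_card, Fintype.card_fin, inv_pow, inv_inv,
        abs_of_nonneg (by positivity)]
      have := hu.1
      gcongr
    · rw [indicator_of_notMem hu]; exact zero_le
  have h6 : volume {u : ℝ | ε * u ∈ Ioo (a/2) a} = ENNReal.ofReal (a/2) := by
    have := Measure.addHaar_preimage_smul (volume : Measure ℝ) (r := ε)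
      (by intro h; simp [h] at hε) (Ioo (a/2) a)
    simp only [smul_eq_mul] at this
    have h7 : {u : ℝ | ε * u ∈ Ioo (a/2) a} = (fun x => ε * x) ⁻¹' (Ioo (a/2) a) := rfl
    rw [h7, this]
    simp [hε, abs_inv]
    congr 1; ring
  rw [setLIntegral_const, h6] at h5
  calc volume B = ENNReal.ofReal ((2*(m+1))^(m+1)) * 
        (ENNReal.ofReal ((a/2)^m) * volume B * ENNReal.ofReal (a/2)) := by
        rw [mul_right_comm, ← mul_assoc, ← ENNReal.ofReal_mul (by positivity),
          ← ENNReal.ofReal_mul (by positivity), ← pow_succ, ← mul_pow, ha]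
        have : (2 * ((m:ℝ)+1) * (1/(m+1)/2)) = 1 := by field_simp
        rw [this]; simp
    _ ≤ _ := by gcongr

lemma chart_le {m : ℕ} (i : Fin (m+1)) (ε : ℝ) (hε : |ε| = 1) :
    ∃ C : ℝ≥0∞, C ≠ ⊤ ∧ ∀ A : Set (Euc (m+1)), MeasurableSet A →
      Measure.hausdorffMeasure (m : ℝ) (A ∩ (Metric.sphere 0 1 ∩ {x | ∀ j, |x j| ≤ ε * x i}))
        ≤ C * tau m A := by
  obtain ⟨K, hK⟩ := insE_lip (m := m) i ε
  refine ⟨(((2 * K : NNReal) : ℝ≥0∞) ^ (m : ℝ)) * ENNReal.ofReal ((2*(m+1))^(m+1)), ?_, ?_⟩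
  · exact ENNReal.mul_ne_top (ENNReal.rpow_ne_top_of_nonneg (by positivity) ENNReal.coe_ne_top)
      ENNReal.ofReal_ne_top
  intro A hA
  let F : (Fin m → ℝ) → Euc (m+1) := fun y => nrm (insE i ε y)
  have hεε : ε * ε = 1 := by rw [← abs_mul_abs_self, hε]; norm_num
  have hFlip : LipschitzWith (2 * K) F := by
    refine LipschitzWith.of_dist_le_mul fun y y' => ?_
    rw [dist_eq_norm]
    refine (nrm_lip _ _ (insE_norm_ge i ε hε y) (insE_norm_ge i ε hε y')).trans ?_
    have := hK.dist_le_mul y y'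
    rw [dist_eq_norm] at this
    push_cast
    linarith
  let B : Set (Fin m → ℝ) := {y | (∀ j, |y j| ≤ 1) ∧ F y ∈ A}
  have hB : MeasurableSet B := by
    have : B = (⋂ j, {y : Fin m → ℝ | |y j| ≤ 1}) ∩ F ⁻¹' A := by
      ext y; simp [B]
    rw [this]
    refine MeasurableSet.inter ?_ (hA.preimage hFlip.continuous.measurable)
    exact MeasurableSet.iInter fun j => measurableSet_le (by fun_prop) (by fun_prop)
  have h1 : A ∩ (Metric.sphere 0 1 ∩ {x | ∀ j, |x j| ≤ ε * x i}) ⊆ F '' B := by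
    rintro x ⟨hxA, hxS, hx⟩
    simp only [mem_ofPred_eq] at hx
    have hxn : ‖x‖ = 1 := by simpa using hxS
    have hs : 0 < ε * x i := by
      by_contra hneg
      push Not at hneg
      have : x = 0 := by
        ext j
        have := hx j
        have h3 := abs_nonneg (x j)
        simpa using (abs_eq_zero.1 (by linarith) : x j = 0)
      rw [this] at hxn
      simp at hxn
    have hx' : insE i ε (fun j => (ε * x i)⁻¹ * x (i.succAbove j)) = (ε * x i)⁻¹ • x := by
      ext j
      revert j
      rw [Fin.forall_iff_succAbove i]
      constructor
      · simp only [insE, Fin.insertNth_apply_same, PiLp.smul_apply, smul_eq_mul]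
        rw [eq_inv_mul_iff_mul_eq₀ hs.ne']
        linear_combination (x i) * hεε
      · intro j
        simp [insE]
    have hF : F (fun j => (ε * x i)⁻¹ * x (i.succAbove j)) = x := by
      simp only [F, hx', nrm]
      rw [norm_smul, hxn, mul_one, Real.norm_of_nonneg (by positivity), inv_inv, smul_smul,
        mul_inv_cancel₀ hs.ne', one_smul]
    refine ⟨_, ⟨fun j => ?_, ?_⟩, hF⟩
    · rw [abs_mul, abs_inv, abs_of_pos hs, inv_mul_le_iff₀ hs, mul_one]
      exact hx _
    · rw [hF]; exact hxA
  refine (measure_mono h1).trans ?_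
  refine (hFlip.hausdorffMeasure_image_le (Nat.cast_nonneg m) B).trans ?_
  rw [mul_assoc]
  gcongr
  have h2 : (Measure.hausdorffMeasure (m : ℝ) : Measure (Fin m → ℝ)) = volume := by
    have := hausdorffMeasure_pi_real (ι := Fin m)
    rwa [Fintype.card_fin] at this
  rw [h2]
  refine (insE_cone i ε hε B hB).trans ?_
  refine mul_le_mul_right ?_ _
  have hval : Measurable (Subtype.val : Metric.sphere (0 : Euc (m+1)) 1 → Euc (m+1)) :=
    measurable_subtype_coe
  rw [tau, Measure.map_apply hval hA, Measure.toSphere_apply' _ (hval hA)]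
  have h3 : (1 : ℝ≥0∞) ≤ (Module.finrank ℝ (Euc (m+1)) : ℝ≥0∞) := by
    simp
  refine le_trans (measure_mono ?_) (le_mul_of_one_le_left zero_le h3)
  rintro x ⟨s, hs0, hs1, y, hy, rfl⟩
  have hn1 := insE_norm_ge i ε hε y
  have hn2 := insE_norm_le i ε hε y hy.1
  have hn0 : 0 < ‖insE i ε y‖ := by linarith
  refine ⟨s * ‖insE i ε y‖, ⟨by positivity, ?_⟩, F y, ⟨⟨F y, ?_⟩, hy.2, rfl⟩, ?_⟩
  · refine lt_of_le_of_lt ?_ hs1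
    gcongr
  · simp only [F, nrm, mem_sphere_iff_norm, sub_zero, norm_smul, norm_inv, norm_norm]
    exact inv_mul_cancel₀ hn0.ne'
  · simp only [F, nrm, smul_smul]
    rw [mul_assoc, mul_inv_cancel₀ hn0.ne', mul_one]

lemma sig_le_tau (m : ℕ) : ∃ C : ℝ≥0∞, C ≠ ⊤ ∧ sig m ≤ C • tau m := by
  choose C hC h using fun (p : Fin (m+1) × Bool) =>
    chart_le (m := m) p.1 (if p.2 then 1 else -1) (by split_ifs <;> simp)
  refine ⟨∑ p, C p, ?_, ?_⟩
  · exact ENNReal.sum_ne_top.2 fun p _ => hC p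
  refine Measure.le_iff.2 fun A hA => ?_
  rw [sig, Measure.restrict_apply hA, Measure.smul_apply, smul_eq_mul, Finset.sum_mul]
  refine le_trans ?_ (Finset.sum_le_sum fun p _ => h p A hA)
  refine le_trans (measure_mono ?_) (measure_biUnion_finset_le _ _)
  rintro x ⟨hxA, hxS⟩
  obtain ⟨i, -, hi⟩ := Finset.exists_max_image Finset.univ (fun j => |x j|) ⟨0, Finset.mem_univ _⟩
  simp only [mem_iUnion]
  rcases le_total 0 (x i) with h0 | h0
  · refine ⟨(i, true), Finset.mem_univ _, hxA, hxS, fun j => ?_⟩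
    have := hi j (Finset.mem_univ _)
    simpa [abs_of_nonneg h0] using this
  · refine ⟨(i, false), Finset.mem_univ _, hxA, hxS, fun j => ?_⟩
    have := hi j (Finset.mem_univ _)
    simpa [abs_of_nonpos h0] using this

instance tau_fin (m : ℕ) : IsFiniteMeasure (tau m) := by
  unfold tau; infer_instance

instance sig_fin (m : ℕ) : IsFiniteMeasure (sig m) := by
  obtain ⟨C, hC, h⟩ := sig_le_tau m
  refine ⟨lt_of_le_of_lt (h univ) ?_⟩
  rw [Measure.smul_apply, smul_eq_mul]
  exact ENNReal.mul_lt_top hC.lt_top (measure_lt_top _ _)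

/-- polar coordinates -/
lemma polar_tau (m : ℕ) (f : Euc (m+1) → ℝ≥0∞) (hf : Measurable f) :
    ∫⁻ θ, (∫⁻ t in Ioi (0:ℝ), ENNReal.ofReal (t^m) * f (t • θ)) ∂(tau m) = ∫⁻ x, f x := by
  have hval : Measurable (Subtype.val : Metric.sphere (0 : Euc (m+1)) 1 → Euc (m+1)) :=
    measurable_subtype_coe
  have hmp := (volume : Measure (Euc (m+1))).measurePreserving_homeomorphUnitSphereProd
  have hfin : Module.finrank ℝ (Euc (m+1)) - 1 = m := by simp
  rw [hfin] at hmp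
  have h1 : ∫⁻ x, f x = ∫⁻ x : ({0}ᶜ : Set (Euc (m+1))), f x ∂(Measure.comap Subtype.val volume) := by
    have h0 : MeasurableSet ({0}ᶜ : Set (Euc (m+1))) := (measurableSet_singleton _).compl
    rw [lintegral_subtype_comap h0]
    rw [restrict_compl_singleton]
  have h2 : ∀ x : ({0}ᶜ : Set (Euc (m+1))), f x =
      (fun p : Metric.sphere (0 : Euc (m+1)) 1 × Ioi (0:ℝ) => f ((p.2 : ℝ) • (p.1 : Euc (m+1))))
        (homeomorphUnitSphereProd (Euc (m+1)) x) := by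
    intro x
    have := (homeomorphUnitSphereProd (Euc (m+1))).symm_apply_apply x
    conv_lhs => rw [← this]
    rfl
  have hfm : Measurable (fun p : Metric.sphere (0 : Euc (m+1)) 1 × Ioi (0:ℝ) =>
      f ((p.2 : ℝ) • (p.1 : Euc (m+1)))) := hf.comp (by fun_prop)
  rw [h1]
  simp_rw [h2]
  rw [hmp.lintegral_comp hfm, lintegral_prod _ hfm.aemeasurable, tau, lintegral_map _ hval]
  · refine lintegral_congr fun θ => ?_
    rw [Measure.volumeIoiPow, lintegral_withDensity_eq_lintegral_mul _ (by fun_prop)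
      (by fun_prop)]
    simp only [Pi.mul_apply]
    rw [lintegral_subtype_comap measurableSet_Ioi
      (fun t : ℝ => ENNReal.ofReal (t^m) * f (t • (θ : Euc (m+1))))]
  · refine Measurable.lintegral_prod_right ?_
    fun_prop

lemma tau_ae (m : ℕ) : ∀ᵐ θ ∂(tau m), ‖θ‖ = 1 := by
  have hval : Measurable (Subtype.val : Metric.sphere (0 : Euc (m+1)) 1 → Euc (m+1)) :=
    measurable_subtype_coe
  rw [tau, ae_map_iff hval.aemeasurable (measurableSet_eq_fun (by fun_prop) (by fun_prop))]
  exact Eventually.of_forall fun x => by simp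

lemma sig_ae (m : ℕ) : ∀ᵐ θ ∂(sig m), ‖θ‖ = 1 := by
  rw [sig]
  filter_upwards [ae_restrict_mem Metric.isClosed_sphere.measurableSet] with x hx
  simpa using hx

/-- squared `H¹` norm -/
def H1 {m : ℕ} (g : SchwartzMap (Euc (m+1)) ℂ) : ℝ≥0∞ :=
  ∫⁻ x, (‖g x‖ₑ ^ 2 + ‖fderiv ℝ g x‖ₑ ^ 2)

lemma line_trace {m : ℕ} (g : SchwartzMap (Euc (m+1)) ℂ) (c θ : Euc (m+1)) (hθ : ‖θ‖ = 1) (R : ℝ) :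
    ‖g (c + R • θ)‖ₑ ^ 2 ≤
      ∫⁻ t in Ioi R, (‖g (c + t • θ)‖ₑ ^ 2 + ‖fderiv ℝ g (c + t • θ)‖ₑ ^ 2) := by
  set I := ∫⁻ t in Ioi R, (‖g (c + t • θ)‖ₑ ^ 2 + ‖fderiv ℝ g (c + t • θ)‖ₑ ^ 2) with hI
  let f : ℝ → ℝ := fun t => ‖g (c + t • θ)‖ ^ 2
  have hgd : ContDiff ℝ 1 g := g.smooth 1
  have hline : ContDiff ℝ 1 (fun t : ℝ => c + t • θ) := by fun_prop
  have hf : ContDiff ℝ 1 f := (hgd.comp hline).norm_sq ℝ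
  have hder : ∀ t, ‖deriv f t‖ₑ ≤ ‖g (c + t • θ)‖ₑ ^ 2 + ‖fderiv ℝ g (c + t • θ)‖ₑ ^ 2 := by
    intro t
    have h1 : HasDerivAt (fun t : ℝ => c + t • θ) θ t := by
      simpa using ((hasDerivAt_id t).smul_const θ).const_add c
    have h2 : HasDerivAt (fun t : ℝ => g (c + t • θ)) (fderiv ℝ g (c + t • θ) θ) t :=
      ((hgd.differentiable (by norm_num)) _).hasFDerivAt.comp_hasDerivAt t h1
    have h3 := h2.norm_sq
    have h4 : deriv f t = _ := h3.deriv
    rw [h4]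
    set a := g (c + t • θ)
    set b := fderiv ℝ g (c + t • θ)
    have hb : ‖b θ‖ ≤ ‖b‖ := by simpa [hθ] using b.le_opNorm θ
    have h5 : ‖2 * ⟪a, b θ⟫‖ ≤ ‖a‖ ^ 2 + ‖b‖ ^ 2 := by
      rw [norm_mul]
      have := norm_inner_le_norm (𝕜 := ℝ) a (b θ)
      have h6 : ‖a‖ * ‖b θ‖ ≤ ‖a‖ * ‖b‖ := by gcongr
      norm_num
      norm_num at this
      nlinarith [sq_nonneg (‖a‖ - ‖b‖)]
    have h7 : ‖a‖ₑ ^ 2 + ‖b‖ₑ ^ 2 = ENNReal.ofReal (‖a‖ ^ 2 + ‖b‖ ^ 2) := by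
      rw [ENNReal.ofReal_add (by positivity) (by positivity), ENNReal.ofReal_pow (by positivity),
        ENNReal.ofReal_pow (by positivity), ofReal_norm, ofReal_norm]
    rw [h7, ← ofReal_norm]
    exact ENNReal.ofReal_le_ofReal h5
  have hT : ∀ T, R ≤ T → ‖g (c + R • θ)‖ₑ ^ 2 ≤ ‖f T‖ₑ + I := by
    intro T hRT
    have h1 := enorm_sub_le_lintegral_deriv_of_contDiffOn_Icc (hf.contDiffOn (s := Icc R T)) hRT
    have h2 : ∫⁻ x in Icc R T, ‖deriv f x‖ₑ ≤ I := by
      rw [hI, ← restrict_Ioc_eq_restrict_Icc]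
      exact lintegral_mono' (Measure.restrict_mono Ioc_subset_Ioi_self le_rfl) hder
    have h3 : ‖g (c + R • θ)‖ₑ ^ 2 = ‖f R‖ₑ := by
      simp only [f, enorm_pow, enorm_norm]
    rw [h3]
    calc ‖f R‖ₑ = ‖f T - (f T - f R)‖ₑ := by rw [sub_sub_cancel]
      _ ≤ ‖f T‖ₑ + ‖f T - f R‖ₑ := by
          rw [sub_eq_add_neg]
          refine (enorm_add_le _ _).trans ?_
          rw [enorm_neg]
      _ ≤ _ := by gcongr; exact h1.trans h2
  have hlim : Tendsto (fun T => ‖f T‖ₑ + I) atTop (nhds (0 + I)) := by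
    refine Tendsto.add ?_ tendsto_const_nhds
    rw [show (0 : ℝ≥0∞) = ‖(0:ℝ)‖ₑ by simp]
    refine Tendsto.enorm ?_
    have h1 : Tendsto (fun T : ℝ => c + T • θ) atTop (cocompact (Euc (m+1))) := by
      rw [← Metric.cobounded_eq_cocompact, ← tendsto_norm_atTop_iff_cobounded]
      refine tendsto_atTop_mono (f := fun T : ℝ => |T| - ‖c‖) (fun T => ?_)
        (tendsto_atTop_add_const_right _ _ tendsto_abs_atTop_atTop)
      have := norm_sub_norm_le (T • θ) (-c)
      rw [norm_neg, norm_smul, hθ, mul_one, sub_neg_eq_add, add_comm (T • θ)] at this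
      exact this
    have h2 : Tendsto g (cocompact (Euc (m+1))) (nhds 0) := zero_at_infty g
    have h3 := (h2.comp h1).norm.pow 2
    simpa [f, Function.comp_def] using h3
  rw [zero_add] at hlim
  exact ge_of_tendsto hlim (eventually_atTop.2 ⟨R, hT⟩)

lemma trace (m : ℕ) : ∃ C : ℝ≥0∞, C ≠ ⊤ ∧ ∀ (g : SchwartzMap (Euc (m+1)) ℂ) (c : Euc (m+1))
    (R : ℝ), 0 < R →
    ENNReal.ofReal (R ^ m) * ∫⁻ θ, ‖g (c + R • θ)‖ₑ ^ 2 ∂(sig m) ≤ C * H1 g := by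
  obtain ⟨C, hC, hle⟩ := sig_le_tau m
  refine ⟨C, hC, fun g c R hR => ?_⟩
  have hgc : Continuous g := g.continuous
  have hdc : Continuous (fderiv ℝ g) := (g.smooth 1).continuous_fderiv (by norm_num)
  let F : Euc (m+1) → ℝ≥0∞ := fun x => ‖g (c + x)‖ₑ ^ 2 + ‖fderiv ℝ g (c + x)‖ₑ ^ 2
  have hF : Measurable F := by
    have : Continuous F := by fun_prop
    exact this.measurable
  calc ENNReal.ofReal (R ^ m) * ∫⁻ θ, ‖g (c + R • θ)‖ₑ ^ 2 ∂(sig m)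
      ≤ ENNReal.ofReal (R ^ m) * ∫⁻ θ, ‖g (c + R • θ)‖ₑ ^ 2 ∂(C • tau m) := by
        gcongr
    _ = C * ∫⁻ θ, ENNReal.ofReal (R ^ m) * ‖g (c + R • θ)‖ₑ ^ 2 ∂(tau m) := by
        rw [lintegral_smul_measure, lintegral_const_mul' _ _ ENNReal.ofReal_ne_top, smul_eq_mul]
        ring
    _ ≤ C * ∫⁻ θ, (∫⁻ t in Ioi (0:ℝ), ENNReal.ofReal (t^m) * F (t • θ)) ∂(tau m) := by
        refine mul_le_mul_right ?_ _
        refine lintegral_mono_ae ?_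
        filter_upwards [tau_ae m] with θ hθ
        calc _ ≤ ENNReal.ofReal (R ^ m) * ∫⁻ t in Ioi R, F (t • θ) := by
              gcongr; exact line_trace g c θ hθ R
          _ = ∫⁻ t in Ioi R, ENNReal.ofReal (R ^ m) * F (t • θ) := by
              rw [lintegral_const_mul' _ _ ENNReal.ofReal_ne_top]
          _ ≤ ∫⁻ t in Ioi R, ENNReal.ofReal (t ^ m) * F (t • θ) := by
              refine setLIntegral_mono' measurableSet_Ioi fun t ht => ?_
              have : R < t := ht
              gcongr
          _ ≤ _ := lintegral_mono_set (Ioi_subset_Ioi hR.le)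
    _ = C * H1 g := by
        rw [polar_tau m F hF, H1]
        congr 1
        exact lintegral_add_left_eq_self (fun x => ‖g x‖ₑ ^ 2 + ‖fderiv ℝ g x‖ₑ ^ 2) c

def Phi {m : ℕ} (r : ℝ) (θ η : Euc (m+1)) : Euc (m+1) := (2:ℝ)⁻¹ • (η - (r * ‖η‖) • θ)

lemma Phi_anti {m : ℕ} (r : ℝ) (hr : r ∈ Ioo (0:ℝ) 2) (θ : Euc (m+1)) (hθ : ‖θ‖ = 1)
    (η η' : Euc (m+1)) (h : ⟪η, θ⟫ ≤ 0) (h' : ⟪η', θ⟫ ≤ 0) :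
    ‖η - η'‖ ≤ 8 * ‖Phi r θ η - Phi r θ η'‖ := by
  have hr0 := hr.1
  have hr2 := hr.2
  set w := η - η' with hw
  set k := ‖η‖ - ‖η'‖ with hk
  set v := w - (r * k) • θ with hv
  have hPhi : Phi r θ η - Phi r θ η' = (2:ℝ)⁻¹ • v := by
    rw [Phi, Phi, ← smul_sub, hv, hw, hk, mul_sub, sub_smul]
    congr 1; abel
  rw [hPhi, norm_smul]
  set a := ⟪w, θ⟫ with ha
  set p := w - a • θ with hp
  have hθθ : ⟪θ, θ⟫ = 1 := by rw [real_inner_self_eq_norm_sq, hθ]; norm_num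
  have hpθ : ⟪p, θ⟫ = 0 := by
    rw [hp, inner_sub_left, real_inner_smul_left, hθθ, ← ha]; ring
  have hvθ : ⟪v, θ⟫ = a - r * k := by
    rw [hv, inner_sub_left, real_inner_smul_left, hθθ, ← ha]; ring
  have hvp : v = p + (a - r * k) • θ := by
    rw [hv, hp, sub_smul]; abel
  have hp_le : ‖p‖ ≤ ‖v‖ := by
    have : ‖v‖ ^ 2 = ‖p‖ ^ 2 + (a - r * k) ^ 2 := by
      rw [hvp, norm_add_sq_real, real_inner_smul_right, hpθ, norm_smul, hθ, Real.norm_eq_abs, mul_one,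
        sq_abs]; ring
    refine (pow_le_pow_iff_left₀ (norm_nonneg _) (norm_nonneg _) (n := 2) (by norm_num)).1 ?_
    nlinarith [sq_nonneg (a - r*k)]
  have hvθ_le : |a - r * k| ≤ ‖v‖ := by
    rw [← hvθ]
    simpa [hθ] using abs_real_inner_le_norm v θ
  have hw_le : ‖w‖ ≤ |a| + ‖p‖ := by
    have : w = a • θ + p := by rw [hp]; abel
    calc ‖w‖ = ‖a • θ + p‖ := by rw [← this]
      _ ≤ ‖a • θ‖ + ‖p‖ := norm_add_le _ _
      _ = _ := by rw [norm_smul, hθ, mul_one, Real.norm_eq_abs]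
  -- key
  set N := ‖η‖ + ‖η'‖ with hN
  have hkN : k * N = a * (⟪η, θ⟫ + ⟪η', θ⟫) + ⟪p, η + η'⟫ := by
    have h1 : k * N = ⟪w, η + η'⟫ := by
      rw [hw, inner_sub_left, inner_add_right, inner_add_right, real_inner_self_eq_norm_sq,
        real_inner_self_eq_norm_sq, real_inner_comm η η', hk, hN]
      ring
    have h2 : ⟪p, η + η'⟫ = ⟪w, η + η'⟫ - a * (⟪η, θ⟫ + ⟪η', θ⟫) := by
      rw [hp, inner_sub_left, real_inner_smul_left, inner_add_right θ, real_inner_comm η θ,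
        real_inner_comm η' θ]
    linarith
  have ha_le : |a| ≤ 3 * ‖v‖ := by
    rcases eq_or_lt_of_le (show 0 ≤ N by positivity) with hN0 | hN0
    · have e1 : ‖η‖ = 0 := by
        have := norm_nonneg η; have := norm_nonneg η'; linarith
      have e2 : ‖η'‖ = 0 := by
        have := norm_nonneg η; have := norm_nonneg η'; linarith
      have : a = 0 := by
        rw [ha, hw, norm_eq_zero.1 e1, norm_eq_zero.1 e2]; simp
      rw [this]; simp
    · have hpin : |⟪p, η + η'⟫| ≤ ‖p‖ * N := by
        refine (abs_real_inner_le_norm _ _).trans ?_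
        gcongr
        exact norm_add_le _ _
      set b := ⟪η, θ⟫ + ⟪η', θ⟫ with hb
      have hb0 : b ≤ 0 := by linarith
      have e : a * (N - r * b) = (a - r * k) * N + r * ⟪p, η + η'⟫ := by
        linear_combination r * hkN
      have h1 : |a| * N ≤ |a| * (N - r * b) := by
        gcongr; nlinarith
      have h2 : |a| * (N - r * b) = |(a - r * k) * N + r * ⟪p, η + η'⟫| := by
        rw [← e, abs_mul, abs_of_nonneg (show 0 ≤ N - r * b by nlinarith)]
      have h3 : |(a - r * k) * N + r * ⟪p, η + η'⟫| ≤ ‖v‖ * N + 2 * (‖v‖ * N) := by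
        refine (abs_add_le _ _).trans ?_
        rw [abs_mul, abs_mul, abs_of_pos hN0, abs_of_pos hr0]
        have h5 : ‖p‖ * N ≤ ‖v‖ * N := by gcongr
        gcongr
        exact hpin.trans h5
      have h4 : |a| * N ≤ (3 * ‖v‖) * N := by linarith
      exact le_of_mul_le_mul_right h4 hN0
  have : ‖(2:ℝ)⁻¹‖ = 2⁻¹ := by norm_num
  rw [this]
  linarith

lemma Phi_measure (m : ℕ) : ∃ C : ℝ≥0∞, C ≠ ⊤ ∧ ∀ (r : ℝ), r ∈ Ioo (0:ℝ) 2 → ∀ θ : Euc (m+1),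
    ‖θ‖ = 1 → ∀ F : Euc (m+1) → ℝ≥0∞, Measurable F →
    ∫⁻ η in {η | ⟪η, θ⟫ ≤ 0}, F (Phi r θ η) ≤ C * ∫⁻ ζ, F ζ := by
  refine ⟨((8 : NNReal) : ℝ≥0∞) ^ ((m+1 : ℕ) : ℝ), 
    ENNReal.rpow_ne_top_of_nonneg (by positivity) ENNReal.coe_ne_top, ?_⟩
  intro r hr θ hθ F hF
  set H : Set (Euc (m+1)) := {η | ⟪η, θ⟫ ≤ 0} with hH
  have hHm : MeasurableSet H := measurableSet_le (by fun_prop) (by fun_prop)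
  have hPm : Measurable (Phi (m := m) r θ) := by unfold Phi; fun_prop
  obtain ⟨c, hc⟩ : ∃ c : NNReal, (volume : Measure (Euc (m+1))) =
      c • Measure.hausdorffMeasure ((m+1 : ℕ) : ℝ) :=
    ⟨_, Measure.isAddLeftInvariant_eq_smul _ _⟩
  have key : (volume.restrict H).map (Phi r θ) ≤
      (((8 : NNReal) : ℝ≥0∞) ^ ((m+1 : ℕ) : ℝ)) • (volume : Measure (Euc (m+1))) := by
    refine Measure.le_iff.2 fun A hA => ?_
    rw [Measure.map_apply hPm hA, Measure.restrict_apply (hPm hA), Measure.smul_apply, smul_eq_mul]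
    have hanti : AntilipschitzWith 8 (fun x : H => Phi r θ (x : Euc (m+1))) := by
      refine AntilipschitzWith.of_le_mul_dist fun x y => ?_
      rw [Subtype.dist_eq, dist_eq_norm, dist_eq_norm]
      exact Phi_anti r hr θ hθ x y x.2 y.2
    have h1 := hanti.hausdorffMeasure_preimage_le (d := ((m+1 : ℕ) : ℝ)) (by positivity) A
    have h2 := (isometry_subtype_coe (s := H)).hausdorffMeasure_image (d := ((m+1 : ℕ) : ℝ))
      (Or.inl (by positivity)) ((fun x : H => Phi r θ (x : Euc (m+1))) ⁻¹' A)
    have h3 : Subtype.val '' ((fun x : H => Phi r θ (x : Euc (m+1))) ⁻¹' A) =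
        Phi r θ ⁻¹' A ∩ H := by
      ext x; simp [and_comm]
    rw [← h2, h3] at h1
    rw [hc, Measure.smul_apply, Measure.smul_apply, ENNReal.smul_def, ENNReal.smul_def, smul_eq_mul,
      smul_eq_mul]
    calc _ ≤ (c : ℝ≥0∞) * (((8 : NNReal) : ℝ≥0∞) ^ ((m+1 : ℕ) : ℝ) *
          Measure.hausdorffMeasure ((m+1 : ℕ) : ℝ) A) := by gcongr
      _ = _ := by ring
  rw [← lintegral_map hF hPm]
  refine (lintegral_mono' key le_rfl).trans ?_
  rw [lintegral_smul_measure, smul_eq_mul]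

/-- `sine power` weight -/
def sw {m : ℕ} (b : ℝ) (ω x : Euc (m+1)) : ℝ≥0∞ :=
  (ENNReal.ofReal (‖x‖ ^ 2 - ⟪ω, x⟫ ^ 2)) ^ (-b)

lemma sw_meas {m : ℕ} (b : ℝ) (ω : Euc (m+1)) : Measurable (sw b ω) := by
  unfold sw; fun_prop

lemma ball_int (k : ℕ) (b : ℝ) (hbk : 2 * b < k + 1) :
    ∫⁻ y in Metric.ball (0 : Euc (k+1)) 1, (ENNReal.ofReal (‖y‖ ^ 2)) ^ (-b) ≠ ⊤ := by
  rw [← lintegral_indicator Metric.isOpen_ball.measurableSet, ← polar_tau]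
  swap
  · exact Measurable.indicator (by fun_prop) Metric.isOpen_ball.measurableSet
  have h1 : ∀ᵐ θ ∂(tau k), (∫⁻ t in Ioi (0:ℝ), ENNReal.ofReal (t^k) *
      (Metric.ball (0 : Euc (k+1)) 1).indicator
        (fun y => (ENNReal.ofReal (‖y‖ ^ 2)) ^ (-b)) (t • θ)) ≤
      ∫⁻ t in Ioo (0:ℝ) 1, ENNReal.ofReal (t ^ ((k:ℝ) - 2 * b)) := by
    filter_upwards [tau_ae k] with θ hθ
    rw [← lintegral_indicator measurableSet_Ioi, ← lintegral_indicator measurableSet_Ioo]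
    refine lintegral_mono fun t => ?_
    by_cases ht : 0 < t
    · by_cases ht1 : t < 1
      · have e1 : t • θ ∈ Metric.ball (0 : Euc (k+1)) 1 := by
          simp [norm_smul, hθ, abs_of_pos ht, ht1]
        rw [indicator_of_mem (show t ∈ Ioi (0:ℝ) from ht), indicator_of_mem e1,
          indicator_of_mem (show t ∈ Ioo (0:ℝ) 1 from ⟨ht, ht1⟩)]
        have e2 : ‖t • θ‖ = t := by simp [norm_smul, hθ, abs_of_pos ht]
        rw [e2, ENNReal.ofReal_rpow_of_pos (by positivity), ← ENNReal.ofReal_mul (by positivity)]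
        apply ENNReal.ofReal_le_ofReal
        rw [← Real.rpow_natCast t 2, ← Real.rpow_mul ht.le, ← Real.rpow_natCast t k,
          ← Real.rpow_add ht]
        apply le_of_eq; congr 1; push_cast; ring
      · have e1 : t • θ ∉ Metric.ball (0 : Euc (k+1)) 1 := by
          simp [norm_smul, hθ, abs_of_pos ht]; linarith
        rw [indicator_of_mem (show t ∈ Ioi (0:ℝ) from ht), indicator_of_notMem e1, mul_zero]
        exact bot_le
    · simp [Set.indicator, ht]
  refine ne_top_of_le_ne_top ?_ (lintegral_mono_ae h1)
  rw [lintegral_const]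
  refine ENNReal.mul_ne_top ?_ (measure_ne_top _ _)
  have h2 : IntervalIntegrable (fun t : ℝ => t ^ ((k:ℝ) - 2 * b)) volume 0 1 :=
    intervalIntegral.intervalIntegrable_rpow' (by linarith)
  rw [intervalIntegrable_iff_integrableOn_Ioo_of_le (by norm_num)] at h2
  exact h2.lintegral_lt_top.ne

lemma sw_e0 (k : ℕ) (b : ℝ) (hbk : 2 * b < k + 1) :
    ∫⁻ x in Metric.ball (0 : Euc (k+1+1)) 1, sw b (EuclideanSpace.single 0 1) x ≠ ⊤ := by
  have A : MeasurePreserving (WithLp.ofLp : Euc (k+1+1) → (Fin (k+1+1) → ℝ)) volume volume :=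
    PiLp.volume_preserving_ofLp _
  have B := volume_preserving_piFinSuccAbove (fun _ : Fin (k+1+1) => ℝ) 0
  have D : MeasurePreserving (WithLp.toLp 2 : (Fin (k+1) → ℝ) → Euc (k+1)) volume volume :=
    PiLp.volume_preserving_toLp _
  have E := ((MeasurePreserving.id (volume : Measure ℝ)).prod D).comp (B.comp A)
  set T := (Prod.map id (WithLp.toLp 2 : (Fin (k+1) → ℝ) → Euc (k+1))) ∘
    (MeasurableEquiv.piFinSuccAbove (fun _ : Fin (k+1+1) => ℝ) 0) ∘
      (WithLp.ofLp : Euc (k+1+1) → (Fin (k+1+1) → ℝ)) with hT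
  have hT1 : ∀ x, (T x).1 = x 0 := fun x => rfl
  have hT2 : ∀ x j, (T x).2 j = x j.succ := fun x j => rfl
  have hn : ∀ x, ‖x‖ ^ 2 = (T x).1 ^ 2 + ‖(T x).2‖ ^ 2 := by
    intro x
    rw [EuclideanSpace.norm_sq_eq, EuclideanSpace.norm_sq_eq, Fin.sum_univ_succ, hT1]
    simp [hT2]
  let G : ℝ × Euc (k+1) → ℝ≥0∞ := fun p => (Ioo (-1:ℝ) 1).indicator (fun _ => 1) p.1 *
    (Metric.ball (0 : Euc (k+1)) 1).indicator (fun y => (ENNReal.ofReal (‖y‖ ^ 2)) ^ (-b)) p.2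
  have hm1 : Measurable ((Ioo (-1:ℝ) 1).indicator (fun _ => (1:ℝ≥0∞))) :=
    measurable_const.indicator measurableSet_Ioo
  have hm2 : Measurable ((Metric.ball (0 : Euc (k+1)) 1).indicator
      (fun y => (ENNReal.ofReal (‖y‖ ^ 2)) ^ (-b))) :=
    Measurable.indicator (by fun_prop) Metric.isOpen_ball.measurableSet
  have hG : Measurable G := by
    exact (hm1.comp measurable_fst).mul (hm2.comp measurable_snd)
  have h1 : ∫⁻ x in Metric.ball (0 : Euc (k+1+1)) 1, sw b (EuclideanSpace.single 0 1) x ≤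
      ∫⁻ x, G (T x) := by
    rw [← lintegral_indicator Metric.isOpen_ball.measurableSet]
    refine lintegral_mono fun x => ?_
    by_cases hx : x ∈ Metric.ball (0 : Euc (k+1+1)) 1
    · rw [indicator_of_mem hx]
      have hx1 : ‖x‖ < 1 := by simpa using hx
      have h0 := hn x
      have hx2 : ‖x‖ ^ 2 < 1 := by nlinarith [norm_nonneg x]
      have e1 : (T x).1 ∈ Ioo (-1:ℝ) 1 := by
        rw [mem_Ioo]; constructor <;> nlinarith [sq_nonneg ‖(T x).2‖]
      have e2 : (T x).2 ∈ Metric.ball (0 : Euc (k+1)) 1 := by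
        simp only [mem_ball_zero_iff]
        nlinarith [sq_nonneg (T x).1, norm_nonneg (T x).2]
      simp only [G]
      rw [indicator_of_mem e1, indicator_of_mem e2, one_mul, sw, h0, hT1]
      apply le_of_eq
      congr 2
      rw [EuclideanSpace.inner_single_left]
      simp
    · rw [indicator_of_notMem hx]; exact bot_le
  refine ne_top_of_le_ne_top ?_ h1
  have h2 : ∫⁻ x, G (T x) = ∫⁻ p, G p ∂((volume : Measure ℝ).prod (volume : Measure (Euc (k+1)))) :=
    E.lintegral_comp hG
  rw [h2, lintegral_prod_mul hm1.aemeasurable hm2.aemeasurable, 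
    lintegral_indicator Metric.isOpen_ball.measurableSet, lintegral_indicator measurableSet_Ioo]
  refine ENNReal.mul_ne_top ?_ (ball_int k b hbk)
  simp

lemma sw_rot (m : ℕ) (b : ℝ) (ω ω' : Euc (m+1)) (h : ‖ω‖ = ‖ω'‖) :
    ∫⁻ x in Metric.ball (0 : Euc (m+1)) 1, sw b ω x =
      ∫⁻ x in Metric.ball (0 : Euc (m+1)) 1, sw b ω' x := by
  let L := Submodule.reflection (Submodule.span ℝ {ω - ω'})ᗮ
  have hL : L ω = ω' := Submodule.reflection_sub h
  have hmp : MeasurePreserving L volume volume := L.measurePreserving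
  have h1 := (hmp.restrict_preimage (Metric.isOpen_ball (x := (0 : Euc (m+1))) (ε := 1)).measurableSet).lintegral_comp 
    (sw_meas b ω')
  rw [← h1]
  have h2 : L ⁻¹' Metric.ball 0 1 = Metric.ball 0 1 := by
    ext x; simp
  rw [h2]
  refine lintegral_congr fun x => ?_
  rw [sw, sw, ← hL, L.inner_map_map, L.norm_map]

lemma sine (m : ℕ) (b : ℝ) (hb : 0 ≤ b) (hbm : 2 * b < m) : ∃ C : ℝ≥0∞, C ≠ ⊤ ∧
    ∀ ω : Euc (m+1), ‖ω‖ = 1 → ∫⁻ θ, sw b ω θ ∂(sig m) ≤ C := by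
  obtain ⟨k, rfl⟩ : ∃ k, m = k + 1 := by
    refine ⟨m - 1, ?_⟩
    have : 0 < m := by
      rcases Nat.eq_zero_or_pos m with h | h
      · subst h; norm_num at hbm; linarith
      · exact h
    omega
  obtain ⟨C, hC, hle⟩ := sig_le_tau (k+1)
  set K := ∫⁻ x in Metric.ball (0 : Euc (k+1+1)) 1, sw b (EuclideanSpace.single 0 1) x with hK
  have hKt : K ≠ ⊤ := sw_e0 k b (by push_cast at hbm; linarith)
  refine ⟨C * (2 ^ (k+2) * K), ENNReal.mul_ne_top hC (ENNReal.mul_ne_top (by simp) hKt), ?_⟩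
  intro ω hω
  refine (lintegral_mono' hle le_rfl).trans ?_
  rw [lintegral_smul_measure, smul_eq_mul]
  refine mul_le_mul_right ?_ _
  have hK2 : ∫⁻ x in Metric.ball (0 : Euc (k+1+1)) 1, sw b ω x = K :=
    sw_rot _ b _ _ (by simp [hω])
  rw [← hK2, ← lintegral_indicator Metric.isOpen_ball.measurableSet, ← polar_tau _ _
    ((sw_meas b ω).indicator Metric.isOpen_ball.measurableSet)]
  rw [← lintegral_const_mul' _ _ (by simp)]
  refine lintegral_mono_ae ?_
  filter_upwards [tau_ae (k+1)] with θ hθ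
  have h1 : ∫⁻ t in Ioo (2⁻¹:ℝ) 1, ENNReal.ofReal (2⁻¹ ^ (k+1)) * sw b ω θ ≤
    ∫⁻ t in Ioi (0:ℝ), ENNReal.ofReal (t^(k+1)) *
      (Metric.ball (0 : Euc (k+1+1)) 1).indicator (sw b ω) (t • θ) := by
    refine le_trans ?_ (lintegral_mono_set (show Ioo (2⁻¹:ℝ) 1 ⊆ Ioi 0 from fun t ht => by
      simp only [mem_Ioi]; linarith [ht.1]))
    refine setLIntegral_mono' measurableSet_Ioo fun t ht => ?_
    have ht0 : 0 < t := by linarith [ht.1]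
    have e1 : t • θ ∈ Metric.ball (0 : Euc (k+1+1)) 1 := by
      simp [norm_smul, hθ, abs_of_pos ht0, ht.2]
    rw [indicator_of_mem e1]
    refine mul_le_mul' ?_ ?_
    · apply ENNReal.ofReal_le_ofReal
      exact pow_le_pow_left₀ (by norm_num) ht.1.le _
    · rw [sw, sw, ENNReal.rpow_neg, ENNReal.rpow_neg, ENNReal.inv_le_inv]
      refine ENNReal.rpow_le_rpow (ENNReal.ofReal_le_ofReal ?_) hb
      have h3 : ⟪ω, θ⟫ ^ 2 ≤ ‖θ‖ ^ 2 := by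
        have := abs_real_inner_le_norm ω θ
        rw [hω, one_mul] at this
        rw [← sq_abs]
        gcongr
      rw [norm_smul, inner_smul_right, Real.norm_of_nonneg ht0.le]
      have : t ^ 2 ≤ 1 := by nlinarith [ht.2]
      nlinarith
  rw [setLIntegral_const, Real.volume_Ioo] at h1
  calc sw b ω θ = 2 ^ (k+2) * (ENNReal.ofReal (2⁻¹ ^ (k+1)) * sw b ω θ * 
        ENNReal.ofReal (1 - 2⁻¹)) := by
        have e : (2:ℝ≥0∞) ^ (k+2) = ENNReal.ofReal (2 ^ (k+2)) := by
          rw [ENNReal.ofReal_pow (by norm_num)]; norm_num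
        rw [e, mul_right_comm, ← ENNReal.ofReal_mul (by positivity), ← mul_assoc,
          ← ENNReal.ofReal_mul (by positivity)]
        have : (2:ℝ) ^ (k+2) * (2⁻¹ ^ (k+1) * (1 - 2⁻¹)) = 1 := by
          rw [pow_succ 2 (k+1), inv_pow]
          field_simp; norm_num
        rw [this]; simp
    _ ≤ _ := mul_le_mul_right h1 _

lemma jap_pos {n : ℕ} (x : Euc n) : 0 < jap x := by
  unfold jap; positivity

lemma jap_sq {n : ℕ} (x : Euc n) : jap x ^ 2 = 1 + ‖x‖ ^ 2 := by
  unfold jap; rw [Real.sq_sqrt (by positivity)]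

lemma jap_ge {n : ℕ} (x : Euc n) : ‖x‖ ≤ jap x := by
  unfold jap; apply Real.le_sqrt_of_sq_le; linarith

lemma one_le_jap {n : ℕ} (x : Euc n) : 1 ≤ jap x := by
  unfold jap; apply Real.le_sqrt_of_sq_le; nlinarith [sq_nonneg ‖x‖]

lemma jap_le {n : ℕ} (x : Euc n) (hx : 1 ≤ ‖x‖) : jap x ≤ 2 * ‖x‖ := by
  unfold jap; apply Real.sqrt_le_iff.2; constructor
  · positivity
  · nlinarith

lemma jap_cont {n : ℕ} : Continuous (jap (n := n)) := by
  unfold jap; fun_prop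

@[fun_prop]
lemma jap_meas {n : ℕ} : Measurable (jap (n := n)) := jap_cont.measurable

@[fun_prop]
lemma Phi_cont {m : ℕ} (r : ℝ) : Continuous (fun p : Euc (m+1) × Euc (m+1) => Phi r p.1 p.2) := by
  unfold Phi; fun_prop

lemma Phi_neg_eq {m : ℕ} (r : ℝ) (θ η : Euc (m+1)) :
    Phi (-r) θ η = (2:ℝ)⁻¹ • η + (r * ‖η‖ / 2) • θ := by
  rw [Phi, smul_sub, smul_smul, sub_eq_add_neg, ← neg_smul]
  congr 2; ring

lemma Phi_norm_ge {m : ℕ} (r : ℝ) (hr : 0 < r) (θ η : Euc (m+1)) (h : ⟪η, θ⟫ ≤ 0) :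
    ‖η‖ / 2 ≤ ‖Phi r θ η‖ := by
  rw [Phi, norm_smul]
  have h1 : ‖η‖ ^ 2 ≤ ‖η - (r * ‖η‖) • θ‖ ^ 2 := by
    rw [norm_sub_sq_real, real_inner_smul_right]
    have : 0 ≤ r * ‖η‖ := by positivity
    nlinarith [sq_nonneg ‖(r * ‖η‖) • θ‖]
  have h2 := (pow_le_pow_iff_left₀ (norm_nonneg _) (norm_nonneg _) (n := 2) (by norm_num)).1 h1
  norm_num
  linarith

lemma Phi_geom {m : ℕ} (r : ℝ) (θ η : Euc (m+1)) (hθ : ‖θ‖ = 1) :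
    ‖Phi r θ η‖ ^ 2 - ⟪Phi r θ η, θ⟫ ^ 2 ≤ ‖Phi (-r) θ η‖ ^ 2 := by
  have h : Phi (-r) θ η = Phi r θ η + (r * ‖η‖) • θ := by
    rw [Phi, Phi, smul_sub, smul_sub, smul_smul, smul_smul, sub_add, ← sub_smul]
    congr 2; ring
  rw [h, norm_add_sq_real, real_inner_smul_right, norm_smul, hθ, mul_one, Real.norm_eq_abs, sq_abs]
  nlinarith [sq_nonneg (⟪Phi r θ η, θ⟫ + r * ‖η‖)]

lemma ptwise {m : ℕ} (β α b : ℝ) (hb : 0 ≤ b) (hbβ : b ≤ β)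
    (hex : m + 2 * (α - 1) - 2 * β - 2 * b ≤ 0) (r : ℝ) (hr : 0 < r)
    (θ η : Euc (m+1)) (hθ : ‖θ‖ = 1) (hη : 1 ≤ ‖η‖) (h : ⟪η, θ⟫ ≤ 0) :
    ENNReal.ofReal (jap η ^ (2 * (α - 1)) * ‖η‖ ^ m) *
      (ENNReal.ofReal (jap (Phi (-r) θ η) ^ (-β)) ^ 2 * ENNReal.ofReal (jap (Phi r θ η) ^ (-β)) ^ 2)
    ≤ ENNReal.ofReal (4 ^ (2 * β + 2 * b)) * sw b (nrm (Phi r θ η)) θ := by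
  set ξ := Phi (-r) θ η with hξ
  set ζ := Phi r θ η with hζ
  have hz := Phi_norm_ge r hr θ η h
  have hg := Phi_geom r θ η hθ
  rw [← hζ] at hz hg
  rw [← hξ] at hg
  have hz0 : 0 < ‖ζ‖ := by linarith
  have hJ := jap_pos ξ
  have hJ1 := one_le_jap ξ
  have hZ := jap_pos ζ
  have hE := jap_pos η
  have hE4 : jap η / 4 ≤ ‖ζ‖ := by have := jap_le η hη; linarith
  have hE4' : jap η / 4 ≤ jap ζ := hE4.trans (jap_ge ζ)
  have hs : ENNReal.ofReal ((jap ξ ^ 2 / ‖ζ‖ ^ 2) ^ (-b)) ≤ sw b (nrm ζ) θ := by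
    rw [sw, ← ENNReal.ofReal_rpow_of_pos (by positivity), ENNReal.rpow_neg, ENNReal.rpow_neg,
      ENNReal.inv_le_inv]
    refine ENNReal.rpow_le_rpow (ENNReal.ofReal_le_ofReal ?_) hb
    rw [le_div_iff₀ (by positivity), nrm, real_inner_smul_left, hθ, jap_sq]
    have : (1 ^ 2 - (‖ζ‖⁻¹ * ⟪ζ, θ⟫) ^ 2) * ‖ζ‖ ^ 2 = ‖ζ‖ ^ 2 - ⟪ζ, θ⟫ ^ 2 := by
      field_simp
    rw [this]; linarith
  refine le_trans ?_ (mul_le_mul_right hs _)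
  rw [← ENNReal.ofReal_pow (by positivity), ← ENNReal.ofReal_pow (by positivity),
    ← ENNReal.ofReal_mul (by positivity), ← ENNReal.ofReal_mul (by positivity),
    ← ENNReal.ofReal_mul (by positivity)]
  apply ENNReal.ofReal_le_ofReal
  have p1 : ∀ x : ℝ, 0 < x → (x ^ (-β)) ^ 2 = x ^ (-(2 * β)) := by
    intro x hx
    rw [← Real.rpow_natCast, ← Real.rpow_mul hx.le]; congr 1; push_cast; ring
  rw [p1 _ hJ, p1 _ (jap_pos ζ)]
  have p2 : (jap ξ ^ 2 / ‖ζ‖ ^ 2) ^ (-b) = jap ξ ^ (-(2 * b)) * ‖ζ‖ ^ (2 * b) := by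
    rw [Real.div_rpow (by positivity) (by positivity), ← Real.rpow_natCast, ← Real.rpow_mul hJ.le,
      ← Real.rpow_natCast, ← Real.rpow_mul hz0.le, div_eq_mul_inv, ← Real.rpow_neg hz0.le]
    congr 2 <;> push_cast <;> ring
  rw [p2]
  have q1 : jap ξ ^ (-(2 * β)) ≤ jap ξ ^ (-(2 * b)) :=
    Real.rpow_le_rpow_of_exponent_le hJ1 (by linarith)
  have q2 : jap ζ ^ (-(2 * β)) ≤ (jap η / 4) ^ (-(2 * β)) :=
    Real.rpow_le_rpow_of_nonpos (by positivity) hE4' (by linarith)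
  have q3 : (jap η / 4) ^ (2 * b) ≤ ‖ζ‖ ^ (2 * b) :=
    Real.rpow_le_rpow (by positivity) hE4 (by linarith)
  have q4 : ‖η‖ ^ m ≤ jap η ^ (m:ℝ) := by
    rw [Real.rpow_natCast]
    exact pow_le_pow_left₀ (norm_nonneg _) (jap_ge η) m
  have q5 : jap η ^ (2 * (α - 1)) * jap η ^ (m:ℝ) * (jap η / 4) ^ (-(2 * β)) ≤
      4 ^ (2 * β + 2 * b) * (jap η / 4) ^ (2 * b) := by
    rw [Real.div_rpow hE.le (by norm_num), Real.div_rpow hE.le (by norm_num), Real.rpow_add (by norm_num),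
      Real.rpow_neg (show (0:ℝ) ≤ 4 by norm_num), div_inv_eq_mul]
    have e : jap η ^ (2 * (α - 1)) * jap η ^ (m:ℝ) * jap η ^ (-(2 * β)) ≤ jap η ^ (2 * b) := by
      rw [← Real.rpow_add hE, ← Real.rpow_add hE]
      exact Real.rpow_le_rpow_of_exponent_le (one_le_jap η) (by linarith)
    have e4 : (0:ℝ) < 4 ^ (2 * b) := by positivity
    have e5 : (0:ℝ) < 4 ^ (2 * β) := by positivity
    calc _ = (jap η ^ (2 * (α - 1)) * jap η ^ (m:ℝ) * jap η ^ (-(2 * β))) * 4 ^ (2 * β) := by ring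
      _ ≤ jap η ^ (2 * b) * 4 ^ (2 * β) := by gcongr
      _ = _ := by field_simp
  calc _ ≤ jap η ^ (2 * (α - 1)) * jap η ^ (m:ℝ) * (jap ξ ^ (-(2 * b)) * (jap η / 4) ^ (-(2 * β))) := by
        gcongr
    _ = (jap η ^ (2 * (α - 1)) * jap η ^ (m:ℝ) * (jap η / 4) ^ (-(2 * β))) * jap ξ ^ (-(2 * b)) := by ring
    _ ≤ (4 ^ (2 * β + 2 * b) * (jap η / 4) ^ (2 * b)) * jap ξ ^ (-(2 * b)) := by gcongr
    _ ≤ (4 ^ (2 * β + 2 * b) * ‖ζ‖ ^ (2 * b)) * jap ξ ^ (-(2 * b)) := by gcongr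
    _ = _ := by ring

lemma cs_sq {X : Type*} [MeasurableSpace X] (μ : Measure X) (a b : X → ℝ≥0∞)
    (ha : AEMeasurable a μ) (hb : AEMeasurable b μ) :
    (∫⁻ x, a x * b x ∂μ) ^ 2 ≤ (∫⁻ x, a x ^ 2 ∂μ) * ∫⁻ x, b x ^ 2 ∂μ := by
  have h := ENNReal.lintegral_mul_le_Lp_mul_Lq μ (p := 2) (q := 2) 
    (Real.holderConjugate_iff.2 ⟨by norm_num, by norm_num⟩) ha hb
  have h2 := pow_le_pow_left' h 2
  refine h2.trans (le_of_eq ?_)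
  rw [mul_pow, ← ENNReal.rpow_natCast, ← ENNReal.rpow_natCast, ← ENNReal.rpow_mul, ← ENNReal.rpow_mul]
  norm_num

set_option maxHeartbeats 400000 in
lemma bilin (m : ℕ) (δ : ℝ) (hδ0 : 0 < δ) (hδ1 : δ < 1) (β α b : ℝ) (hb : 0 ≤ b) (hbβ : b ≤ β)
    (hbm : 2 * b < m) (hex : m + 2 * (α - 1) - 2 * β - 2 * b ≤ 0) :
    ∃ C : ℝ≥0∞, C ≠ ⊤ ∧ ∀ (g1 g2 : SchwartzMap (Euc (m+1)) ℂ) (r : ℝ), r ∈ Ioo (1 - δ) (1 + δ) →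
    ∫⁻ η in {η : Euc (m+1) | 1 ≤ ‖η‖}, ENNReal.ofReal (jap η ^ (2 * (α - 1)) * ‖η‖ ^ (2 * m)) *
      (∫⁻ θ in {θ | ⟪η, θ⟫ ≤ 0},
        (‖g1 (Phi (-r) θ η)‖ₑ * (ENNReal.ofReal (jap (Phi (-r) θ η) ^ (-β)) *
          (ENNReal.ofReal (jap (Phi r θ η) ^ (-β)) * ‖g2 (Phi r θ η)‖ₑ))) ∂(sig m)) ^ 2
      ≤ C * (H1 g1 * ∫⁻ x, ‖g2 x‖ₑ ^ 2) := by
  obtain ⟨C1, hC1, htr⟩ := trace m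
  obtain ⟨C2, hC2, hPh⟩ := Phi_measure m
  obtain ⟨C3, hC3, hsin⟩ := sine m b hb hbm
  set K1 := ENNReal.ofReal ((2 / (1 - δ)) ^ m) with hK1
  set K2 := ENNReal.ofReal (4 ^ (2 * β + 2 * b)) with hK2
  refine ⟨(K1 * C1) * (K2 * (C2 * C3)), by finiteness, ?_⟩
  intro g1 g2 r hr
  have hr0 : 0 < r := by linarith [hr.1]
  have hr2 : r < 2 := by linarith [hr.2]
  have hg1 : Continuous g1 := g1.continuous
  have hg2 : Continuous g2 := g2.continuous
  have hPr : Continuous (fun p : Euc (m+1) × Euc (m+1) => Phi r p.1 p.2) := Phi_cont r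
  have hPr' : Continuous (fun p : Euc (m+1) × Euc (m+1) => Phi (-r) p.1 p.2) := Phi_cont (-r)
  have hP1 : ∀ s (η : Euc (m+1)), Continuous (fun θ => Phi s θ η) := fun s η =>
    (Phi_cont s).comp (by fun_prop : Continuous fun θ : Euc (m+1) => (θ, η))
  have hP2 : ∀ s (θ : Euc (m+1)), Continuous (fun η => Phi s θ η) := fun s θ =>
    (Phi_cont s).comp (by fun_prop : Continuous fun η : Euc (m+1) => (θ, η))
  let S : Set (Euc (m+1) × Euc (m+1)) := {p | ⟪p.1, p.2⟫ ≤ 0}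
  have hS : MeasurableSet S := measurableSet_le (by fun_prop) (by fun_prop)
  obtain ⟨W, hWdef⟩ : ∃ W : Euc (m+1) → Euc (m+1) → ℝ≥0∞,
      ∀ ζ θ, W ζ θ = sw b (nrm ζ) θ * ‖g2 ζ‖ₑ ^ 2 := ⟨_, fun _ _ => rfl⟩
  have hWm : Measurable (fun p : Euc (m+1) × Euc (m+1) => W p.1 p.2) := by
    have : Measurable (fun p : Euc (m+1) × Euc (m+1) => ‖g2 p.1‖ₑ) := by
      exact (hg2.measurable.comp measurable_fst).enorm
    simp only [hWdef, sw, nrm]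
    fun_prop
  -- step 1
  have s1 : ∀ η : Euc (m+1), 1 ≤ ‖η‖ →
      ENNReal.ofReal (jap η ^ (2 * (α - 1)) * ‖η‖ ^ (2 * m)) *
      (∫⁻ θ in {θ | ⟪η, θ⟫ ≤ 0},
        (‖g1 (Phi (-r) θ η)‖ₑ * (ENNReal.ofReal (jap (Phi (-r) θ η) ^ (-β)) *
          (ENNReal.ofReal (jap (Phi r θ η) ^ (-β)) * ‖g2 (Phi r θ η)‖ₑ))) ∂(sig m)) ^ 2
      ≤ (K1 * C1 * H1 g1 * K2) * ∫⁻ θ, S.indicator (fun p => W (Phi r p.2 p.1) p.2) (η, θ) ∂(sig m) := by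
    intro η hη
    have hη0 : 0 < ‖η‖ := by linarith
    have hA : MeasurableSet {θ : Euc (m+1) | ⟪η, θ⟫ ≤ 0} :=
      measurableSet_le (by fun_prop) (by fun_prop)
    have m1 : Measurable fun θ => ‖g1 (Phi (-r) θ η)‖ₑ := (hg1.comp (hP1 (-r) η)).measurable.enorm
    have m2 : Measurable fun θ => (ENNReal.ofReal (jap (Phi (-r) θ η) ^ (-β)) *
          (ENNReal.ofReal (jap (Phi r θ η) ^ (-β)) * ‖g2 (Phi r θ η)‖ₑ)) := by
      have a1 : Measurable fun θ => ‖g2 (Phi r θ η)‖ₑ := (hg2.comp (hP1 r η)).measurable.enorm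
      have a2 := (jap_cont.comp (hP1 r η)).measurable
      have a3 := (jap_cont.comp (hP1 (-r) η)).measurable
      simp only [Function.comp_def] at a2 a3
      fun_prop
    have cs := cs_sq ((sig m).restrict {θ | ⟪η, θ⟫ ≤ 0}) _ _ m1.aemeasurable m2.aemeasurable
    have t1 : ENNReal.ofReal (‖η‖ ^ m) *
        ∫⁻ θ in {θ | ⟪η, θ⟫ ≤ 0}, ‖g1 (Phi (-r) θ η)‖ₑ ^ 2 ∂(sig m) ≤ K1 * C1 * H1 g1 := by
      have t2 := htr g1 ((2:ℝ)⁻¹ • η) (r * ‖η‖ / 2) (by positivity)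
      simp only [← Phi_neg_eq] at t2
      have t3 : ENNReal.ofReal (‖η‖ ^ m) ≤ K1 * ENNReal.ofReal ((r * ‖η‖ / 2) ^ m) := by
        rw [hK1, ← ENNReal.ofReal_mul (by have : 0 < 1 - δ := by linarith
                                          positivity), ← mul_pow]
        apply ENNReal.ofReal_le_ofReal
        refine pow_le_pow_left₀ hη0.le ?_ m
        have : 0 < 1 - δ := by linarith
        rw [div_mul_div_comm, le_div_iff₀ (by positivity)]
        nlinarith [hr.1]
      calc _ ≤ (K1 * ENNReal.ofReal ((r * ‖η‖ / 2) ^ m)) * ∫⁻ θ, ‖g1 (Phi (-r) θ η)‖ₑ ^ 2 ∂(sig m) := by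
            refine mul_le_mul' t3 (setLIntegral_le_lintegral _ _)
        _ = K1 * (ENNReal.ofReal ((r * ‖η‖ / 2) ^ m) * ∫⁻ θ, ‖g1 (Phi (-r) θ η)‖ₑ ^ 2 ∂(sig m)) := by
            rw [mul_assoc]
        _ ≤ K1 * (C1 * H1 g1) := mul_le_mul_right t2 _
        _ = _ := by rw [mul_assoc]
    have hsplit : ENNReal.ofReal (jap η ^ (2 * (α - 1)) * ‖η‖ ^ (2 * m)) =
        ENNReal.ofReal (‖η‖ ^ m) * ENNReal.ofReal (jap η ^ (2 * (α - 1)) * ‖η‖ ^ m) := by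
      rw [← ENNReal.ofReal_mul (by positivity)]
      congr 1; rw [two_mul m, pow_add]; ring
    have t4 : ENNReal.ofReal (jap η ^ (2 * (α - 1)) * ‖η‖ ^ m) *
        ∫⁻ θ in {θ | ⟪η, θ⟫ ≤ 0}, ((ENNReal.ofReal (jap (Phi (-r) θ η) ^ (-β)) *
          (ENNReal.ofReal (jap (Phi r θ η) ^ (-β)) * ‖g2 (Phi r θ η)‖ₑ))) ^ 2 ∂(sig m) ≤
        K2 * ∫⁻ θ, S.indicator (fun p => W (Phi r p.2 p.1) p.2) (η, θ) ∂(sig m) := by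
      rw [← lintegral_const_mul' _ _ (by finiteness), ← lintegral_const_mul' _ _ (by finiteness),
        ← lintegral_indicator hA]
      refine lintegral_mono_ae ?_
      filter_upwards [sig_ae m] with θ hθ
      by_cases hh : ⟪η, θ⟫ ≤ 0
      · rw [indicator_of_mem (show θ ∈ {θ : Euc (m+1) | ⟪η, θ⟫ ≤ 0} from hh),
          indicator_of_mem (show (η, θ) ∈ S from hh)]
        have := ptwise β α b hb hbβ hex r hr0 θ η hθ hη hh
        simp only [hWdef]
        calc _ = ENNReal.ofReal (jap η ^ (2 * (α - 1)) * ‖η‖ ^ m) *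
      (ENNReal.ofReal (jap (Phi (-r) θ η) ^ (-β)) ^ 2 * ENNReal.ofReal (jap (Phi r θ η) ^ (-β)) ^ 2)
              * ‖g2 (Phi r θ η)‖ₑ ^ 2 := by ring
          _ ≤ (K2 * sw b (nrm (Phi r θ η)) θ) * ‖g2 (Phi r θ η)‖ₑ ^ 2 := mul_le_mul_left this _
          _ = _ := by rw [mul_assoc]
      · rw [indicator_of_notMem (show θ ∉ {θ : Euc (m+1) | ⟪η, θ⟫ ≤ 0} from hh)]
        exact bot_le
    rw [hsplit]
    calc _ ≤ ENNReal.ofReal (‖η‖ ^ m) * ENNReal.ofReal (jap η ^ (2 * (α - 1)) * ‖η‖ ^ m) * _ :=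
          mul_le_mul_right cs _
      _ = (ENNReal.ofReal (‖η‖ ^ m) *
        ∫⁻ θ in {θ | ⟪η, θ⟫ ≤ 0}, ‖g1 (Phi (-r) θ η)‖ₑ ^ 2 ∂(sig m)) * 
        (ENNReal.ofReal (jap η ^ (2 * (α - 1)) * ‖η‖ ^ m) *
        ∫⁻ θ in {θ | ⟪η, θ⟫ ≤ 0}, ((ENNReal.ofReal (jap (Phi (-r) θ η) ^ (-β)) *
          (ENNReal.ofReal (jap (Phi r θ η) ^ (-β)) * ‖g2 (Phi r θ η)‖ₑ))) ^ 2 ∂(sig m)) := by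
          ring
      _ ≤ _ := mul_le_mul' t1 t4
      _ = _ := by ring
  have hWP : Measurable (fun p : Euc (m+1) × Euc (m+1) => W (Phi r p.2 p.1) p.2) := by
    have : Measurable (fun p : Euc (m+1) × Euc (m+1) => (Phi r p.2 p.1, p.2)) := by
      have := hPr.measurable.comp measurable_swap
      exact this.prodMk measurable_snd
    exact hWm.comp this
  have hSW : Measurable (S.indicator (fun p => W (Phi r p.2 p.1) p.2)) := hWP.indicator hS
  have hWθ : ∀ θ, Measurable (fun ζ => W ζ θ) := fun θ =>
    hWm.comp (by fun_prop : Measurable fun ζ : Euc (m+1) => (ζ, θ))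
  have s2 : ∫⁻ η, ∫⁻ θ, S.indicator (fun p => W (Phi r p.2 p.1) p.2) (η, θ) ∂(sig m) ≤
      C2 * C3 * ∫⁻ x, ‖g2 x‖ₑ ^ 2 := by
    have hsw := lintegral_lintegral_swap (μ := (volume : Measure (Euc (m+1)))) (ν := sig m)
      (f := fun η θ => S.indicator (fun p => W (Phi r p.2 p.1) p.2) (η, θ)) hSW.aemeasurable
    rw [hsw]
    calc _ ≤ ∫⁻ θ, (C2 * ∫⁻ ζ, W ζ θ) ∂(sig m) := by
          refine lintegral_mono_ae ?_
          filter_upwards [sig_ae m] with θ hθ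
          have hA : MeasurableSet {η : Euc (m+1) | ⟪η, θ⟫ ≤ 0} :=
            measurableSet_le (by fun_prop) (by fun_prop)
          refine le_trans (le_of_eq ?_) (hPh r ⟨hr0, hr2⟩ θ hθ (fun ζ => W ζ θ) (hWθ θ))
          rw [← lintegral_indicator hA]
          rfl
      _ = C2 * ∫⁻ ζ, ∫⁻ θ, W ζ θ ∂(sig m) := by
          rw [lintegral_const_mul' _ _ hC2, lintegral_lintegral_swap]
          exact (hWm.comp measurable_swap).aemeasurable
      _ ≤ C2 * ∫⁻ ζ, C3 * ‖g2 ζ‖ₑ ^ 2 := by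
          refine mul_le_mul_right ?_ _
          have h0 : ∀ᵐ ζ : Euc (m+1), ζ ≠ 0 := by
            simp [ae_iff, measure_singleton]
          refine lintegral_mono_ae ?_
          filter_upwards [h0] with ζ hζ
          simp only [hWdef]
          rw [lintegral_mul_const' _ _ (by finiteness)]
          refine mul_le_mul_left (hsin _ ?_) _
          rw [nrm, norm_smul, norm_inv, norm_norm, inv_mul_cancel₀ (norm_ne_zero_iff.2 hζ)]
      _ = _ := by rw [lintegral_const_mul' _ _ hC3, mul_assoc]
  have hset : MeasurableSet {η : Euc (m+1) | 1 ≤ ‖η‖} := measurableSet_le (by fun_prop) (by fun_prop)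
  refine (setLIntegral_mono' hset s1).trans ?_
  refine (setLIntegral_le_lintegral _ _).trans ?_
  rw [lintegral_const_mul _ (Measurable.lintegral_prod_right' hSW)]
  calc _ ≤ (K1 * C1 * H1 g1 * K2) * (C2 * C3 * ∫⁻ x, ‖g2 x‖ₑ ^ 2) := mul_le_mul_right s2 _
    _ = _ := by ring

lemma sig_neg (m : ℕ) : MeasurePreserving (fun θ : Euc (m+1) => -θ) (sig m) (sig m) := by
  have h := (IsometryEquiv.neg (Euc (m+1))).measurePreserving_hausdorffMeasure (m : ℝ)
  have h2 := h.restrict_preimage (s := Metric.sphere (0 : Euc (m+1)) 1)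
    Metric.isClosed_sphere.measurableSet
  have h3 : (IsometryEquiv.neg (Euc (m+1))) ⁻¹' Metric.sphere (0 : Euc (m+1)) 1 =
      Metric.sphere (0 : Euc (m+1)) 1 := by
    ext x; simp
  rw [h3] at h2
  exact h2

lemma ewald_eq (m : ℕ) (c : Euc (m+1)) (R : ℝ) (hR : 0 < R) :
    (Measure.hausdorffMeasure (m:ℝ)).restrict (Metric.sphere c R) =
      ENNReal.ofReal (R ^ m) • (sig m).map (fun θ => c + R • θ) := by
  have hT : Measurable (fun θ : Euc (m+1) => c + R • θ) := by fun_prop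
  ext A hA
  rw [Measure.restrict_apply hA, Measure.smul_apply, Measure.map_apply hT hA, sig,
    Measure.restrict_apply (hT hA), smul_eq_mul]
  set B := (fun θ : Euc (m+1) => c + R • θ) ⁻¹' A ∩ Metric.sphere 0 1 with hB
  have h1 : A ∩ Metric.sphere c R = (fun x => c + x) '' ((fun x => R • x) '' B) := by
    ext x
    constructor
    · rintro ⟨hx, hx2⟩
      have e : c + R • (R⁻¹ • (x - c)) = x := by
        rw [smul_smul, mul_inv_cancel₀ hR.ne', one_smul]; abel
      refine ⟨R • (R⁻¹ • (x - c)), ⟨R⁻¹ • (x - c), ⟨?_, ?_⟩, rfl⟩, e⟩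
      · change c + R • (R⁻¹ • (x - c)) ∈ A
        rw [e]; exact hx
      · rw [mem_sphere_iff_norm] at hx2
        rw [mem_sphere_zero_iff_norm, norm_smul, hx2, norm_inv, Real.norm_of_nonneg hR.le,
          inv_mul_cancel₀ hR.ne']
    · rintro ⟨y, ⟨θ, ⟨h1, h2⟩, rfl⟩, rfl⟩
      refine ⟨h1, ?_⟩
      rw [mem_sphere_zero_iff_norm] at h2
      rw [mem_sphere_iff_norm]
      simp [norm_smul, h2, abs_of_pos hR]
  rw [h1, (isometry_add_left c).hausdorffMeasure_image (Or.inl (by positivity)), image_smul,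
    Measure.hausdorffMeasure_smul₀ (by positivity) hR.ne', ENNReal.smul_def, smul_eq_mul]
  congr 1
  rw [NNReal.rpow_natCast, ENNReal.coe_pow, ENNReal.ofReal_pow hR.le, ← enorm_eq_nnnorm,
    Real.enorm_of_nonneg hR.le]

lemma Phi_add {m : ℕ} (r : ℝ) (θ η : Euc (m+1)) : η - Phi (-r) θ η = Phi r θ η := by
  rw [Phi, Phi, smul_sub, smul_sub, neg_mul, neg_smul, smul_neg, sub_neg_eq_add, ← sub_sub]
  congr 1
  nth_rewrite 1 [show η = (1:ℝ) • η by simp]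
  rw [← sub_smul]; norm_num

lemma Phi_neg_arg {m : ℕ} (r : ℝ) (θ η : Euc (m+1)) : Phi r (-θ) η = Phi (-r) θ η := by
  rw [Phi, Phi]; congr 2; rw [smul_neg, neg_mul, neg_smul]

lemma Sr_eq {m : ℕ} (s : ℝ) (hs : 0 < s) (q : Euc (m+1) → ℂ) (Q : SchwartzMap (Euc (m+1)) ℂ)
    (hQ : ∀ ξ, ft q ξ = Q ξ) (η : Euc (m+1)) (hη : 0 < ‖η‖) :
    Sr s q η = ((‖η‖ ^ m / ‖η‖ * (2 / 2 ^ m) * (s ^ m / (1 + s)) : ℝ)) •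
      ∫ θ, Q (Phi (-s) θ η) * Q (Phi s θ η) ∂(sig m) := by
  have hR : 0 < s * ‖η‖ / 2 := by positivity
  have he : ewaldM (m+1) s η = ENNReal.ofReal ((s * ‖η‖ / 2) ^ m) •
      (sig m).map (fun θ => (2:ℝ)⁻¹ • η + (s * ‖η‖ / 2) • θ) := by
    rw [ewaldM, ← ewald_eq m _ _ hR]
    congr 2
    push_cast; ring
  have hQc : Continuous Q := Q.continuous
  rw [Sr, he, integral_smul_measure, integral_map (by fun_prop) (by
    simp only [hQ]
    exact Continuous.aestronglyMeasurable (by fun_prop))]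
  rw [ENNReal.toReal_ofReal (by positivity), smul_smul]
  congr 1
  · rw [div_pow, mul_pow]; field_simp
  · refine integral_congr_ae (Eventually.of_forall fun θ => ?_)
    simp only [← Phi_neg_eq, hQ, Phi_add]

lemma Phi_deriv {m : ℕ} (θ η : Euc (m+1)) (s : ℝ) :
    HasDerivAt (fun s => Phi s θ η) (-((‖η‖ / 2) • θ)) s := by
  have h : (fun s => Phi s θ η) = fun s : ℝ => (2:ℝ)⁻¹ • η - s • ((‖η‖ / 2) • θ) := by
    funext s; rw [Phi, smul_sub, smul_smul, smul_smul]; congr 2; ring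
  rw [h]
  simpa using ((hasDerivAt_id s).smul_const ((‖η‖ / 2) • θ)).const_sub ((2:ℝ)⁻¹ • η)

lemma Phi_deriv_neg {m : ℕ} (θ η : Euc (m+1)) (s : ℝ) :
    HasDerivAt (fun s => Phi (-s) θ η) ((‖η‖ / 2) • θ) s := by
  have h : (fun s => Phi (-s) θ η) = fun s => Phi s (-θ) η := by
    funext s; rw [Phi_neg_arg]
  rw [h]
  simpa using Phi_deriv (-θ) η s

lemma schwartz_bdd {m : ℕ} (Q : SchwartzMap (Euc (m+1)) ℂ) : ∃ M : ℝ, 0 < M ∧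
    (∀ x, ‖Q x‖ ≤ M) ∧ ∀ x, ‖fderiv ℝ Q x‖ ≤ M := by
  obtain ⟨M1, h1, h1'⟩ := Q.decay 0 0
  obtain ⟨M2, h2, h2'⟩ := Q.decay 0 1
  refine ⟨M1 + M2, by positivity, fun x => ?_, fun x => ?_⟩
  · have := h1' x
    simp at this; linarith
  · have := h2' x
    rw [norm_iteratedFDeriv_one] at this
    simp at this; linarith

/-- derivative of the spherical integral -/
lemma I_deriv {m : ℕ} (Q : SchwartzMap (Euc (m+1)) ℂ) (η : Euc (m+1)) (r : ℝ) :
    HasDerivAt (fun s => ∫ θ, Q (Phi (-s) θ η) * Q (Phi s θ η) ∂(sig m))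
      (∫ θ, (fderiv ℝ Q (Phi (-r) θ η) ((‖η‖ / 2) • θ) * Q (Phi r θ η) +
        Q (Phi (-r) θ η) * fderiv ℝ Q (Phi r θ η) (-((‖η‖ / 2) • θ))) ∂(sig m)) r := by
  obtain ⟨M, hM, hM1, hM2⟩ := schwartz_bdd Q
  have hQc : Continuous Q := Q.continuous
  have hdc : Continuous (fderiv ℝ Q) := (Q.smooth 1).continuous_fderiv (by norm_num)
  have hd : Differentiable ℝ Q := (Q.smooth 1).differentiable (by norm_num)
  have hP1 : ∀ s (η : Euc (m+1)), Continuous (fun θ => Phi s θ η) := fun s η =>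
    (Phi_cont s).comp (by fun_prop : Continuous fun θ : Euc (m+1) => (θ, η))
  have c1 : ∀ s, Continuous (fun θ => Q (Phi s θ η)) := fun s => hQc.comp (hP1 s η)
  have c2 : ∀ s, Continuous (fun θ => fderiv ℝ Q (Phi s θ η)) := fun s => hdc.comp (hP1 s η)
  have hbd : ∀ s, ∀ θ : Euc (m+1), ‖Q (Phi s θ η)‖ ≤ M := fun s θ => hM1 _
  refine (hasDerivAt_integral_of_dominated_loc_of_deriv_le (μ := sig m) (s := univ) (x₀ := r)
    (F := fun s θ => Q (Phi (-s) θ η) * Q (Phi s θ η))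
    (F' := fun s θ => fderiv ℝ Q (Phi (-s) θ η) ((‖η‖ / 2) • θ) * Q (Phi s θ η) +
        Q (Phi (-s) θ η) * fderiv ℝ Q (Phi s θ η) (-((‖η‖ / 2) • θ)))
    (bound := fun _ => M * (‖η‖ / 2) * M + M * (M * (‖η‖ / 2)))
    univ_mem ?_ ?_ ?_ ?_ (integrable_const _) ?_).2
  · exact Eventually.of_forall fun s => ((c1 (-s)).mul (c1 s)).aestronglyMeasurable
  · refine Integrable.of_bound ((c1 (-r)).mul (c1 r)).aestronglyMeasurable (M * M) ?_
    refine Eventually.of_forall fun θ => ?_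
    rw [norm_mul]
    exact mul_le_mul (hM1 _) (hM1 _) (norm_nonneg _) hM.le
  · have a1 := c1 r
    have a2 := c1 (-r)
    have a3 := c2 r
    have a4 := c2 (-r)
    apply Continuous.aestronglyMeasurable
    fun_prop
  · filter_upwards [sig_ae m] with θ hθ s _
    have hn : ‖(‖η‖ / 2) • θ‖ = ‖η‖ / 2 := by
      rw [norm_smul, hθ, mul_one, Real.norm_of_nonneg (by positivity)]
    have hb : ∀ x, ‖fderiv ℝ Q x ((‖η‖ / 2) • θ)‖ ≤ M * (‖η‖ / 2) := fun x => by
      refine ((fderiv ℝ Q x).le_opNorm _).trans ?_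
      rw [hn]
      exact mul_le_mul_of_nonneg_right (hM2 x) (by positivity)
    refine (norm_add_le _ _).trans ?_
    rw [norm_mul, norm_mul, map_neg, norm_neg]
    refine add_le_add (mul_le_mul (hb _) (hM1 _) (norm_nonneg _) (by positivity))
      (mul_le_mul (hM1 _) (hb _) (norm_nonneg _) (by positivity))
  · refine Eventually.of_forall fun θ s _ => ?_
    have e1 := (hd (Phi (-s) θ η)).hasFDerivAt.comp_hasDerivAt s (Phi_deriv_neg θ η s)
    have e2 := (hd (Phi s θ η)).hasFDerivAt.comp_hasDerivAt s (Phi_deriv θ η s)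
    exact e1.mul e2

/-- the symmetric integrand -/
def Tq {m : ℕ} (Q : SchwartzMap (Euc (m+1)) ℂ) (x y : Euc (m+1)) : ℝ≥0∞ :=
  ‖Q x‖ₑ * ‖Q y‖ₑ + ‖fderiv ℝ Q x‖ₑ * ‖Q y‖ₑ + ‖Q x‖ₑ * ‖fderiv ℝ Q y‖ₑ

lemma half_sphere {m : ℕ} (Q : SchwartzMap (Euc (m+1)) ℂ) (η : Euc (m+1)) (r : ℝ) :
    ∫⁻ θ, Tq Q (Phi (-r) θ η) (Phi r θ η) ∂(sig m) ≤
      2 * ∫⁻ θ in {θ | ⟪η, θ⟫ ≤ 0}, Tq Q (Phi (-r) θ η) (Phi r θ η) ∂(sig m) := by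
  have hA : MeasurableSet {θ : Euc (m+1) | ⟪η, θ⟫ ≤ 0} :=
    measurableSet_le (by fun_prop) (by fun_prop)
  rw [← lintegral_add_compl _ hA, two_mul]
  refine add_le_add_right ?_ _
  have h1 := ((sig_neg m).restrict_preimage hA).lintegral_comp_emb
    (MeasurableEquiv.neg (Euc (m+1))).measurableEmbedding 
    (fun θ => Tq Q (Phi (-r) θ η) (Phi r θ η))
  rw [← h1]
  refine (lintegral_mono_set (t := (fun θ => -θ) ⁻¹' {θ : Euc (m+1) | ⟪η, θ⟫ ≤ 0}) ?_).trans ?_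
  · intro θ hθ
    simp only [mem_compl_iff, mem_ofPred_eq, not_le, mem_preimage, inner_neg_right] at hθ ⊢
    linarith
  · refine lintegral_mono fun θ => le_of_eq ?_
    rw [Phi_neg_arg, Phi_neg_arg, neg_neg, Tq, Tq]
    ring

lemma deriv_Sr {m : ℕ} (q : Euc (m+1) → ℂ) (Q : SchwartzMap (Euc (m+1)) ℂ)
    (hQ : ∀ ξ, ft q ξ = Q ξ) (η : Euc (m+1)) (hη : 1 ≤ ‖η‖) (r : ℝ) (hr : r ∈ Ioo (0:ℝ) 2) (c : ℂ)
    (hc : ‖c‖ ≤ 1) :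
    ‖deriv (fun s : ℝ => c * Sr s q η) r‖ₑ ≤ ENNReal.ofReal (6 * (m+1) * ‖η‖ ^ m) *
      ∫⁻ θ in {θ | ⟪η, θ⟫ ≤ 0}, Tq Q (Phi (-r) θ η) (Phi r θ η) ∂(sig m) := by
  obtain ⟨hr0, hr2⟩ := hr
  have hη0 : 0 < ‖η‖ := by linarith
  set k : ℝ := ‖η‖ ^ m / ‖η‖ * (2 / 2 ^ m) with hk
  have hk0 : 0 ≤ k := by positivity
  have hh : HasDerivAt (fun s : ℝ => k * (s ^ m / (1 + s)))
      (k * ((m * r ^ (m - 1) * (1 + r) - r ^ m * 1) / (1 + r) ^ 2)) r := by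
    have h1 : HasDerivAt (fun s : ℝ => 1 + s) 1 r := (hasDerivAt_id r).const_add 1
    exact ((hasDerivAt_pow m r).div h1 (by positivity)).const_mul k
  have hI := I_deriv Q η r
  have hS : (fun s : ℝ => c * Sr s q η) =ᶠ[nhds r] fun s => c * ((k * (s ^ m / (1 + s))) •
      ∫ θ, Q (Phi (-s) θ η) * Q (Phi s θ η) ∂(sig m)) := by
    filter_upwards [lt_mem_nhds hr0] with s hs
    rw [Sr_eq s hs q Q hQ η hη0]
  have hD := ((hh.smul hI).const_mul c).congr_of_eventuallyEq hS
  rw [hD.deriv]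
  set T := ∫⁻ θ, Tq Q (Phi (-r) θ η) (Phi r θ η) ∂(sig m) with hT
  have e0 : ‖∫ θ, Q (Phi (-r) θ η) * Q (Phi r θ η) ∂(sig m)‖ₑ ≤ T := by
    refine (enorm_integral_le_lintegral_enorm _).trans (lintegral_mono fun θ => ?_)
    rw [enorm_mul, Tq, add_assoc]
    exact le_self_add
  have e1 : ‖∫ θ, (fderiv ℝ Q (Phi (-r) θ η) ((‖η‖ / 2) • θ) * Q (Phi r θ η) +
        Q (Phi (-r) θ η) * fderiv ℝ Q (Phi r θ η) (-((‖η‖ / 2) • θ))) ∂(sig m)‖ₑ ≤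
      ENNReal.ofReal (‖η‖ / 2) * T := by
    refine (enorm_integral_le_lintegral_enorm _).trans ?_
    rw [hT, ← lintegral_const_mul' _ _ ENNReal.ofReal_ne_top]
    refine lintegral_mono_ae ?_
    filter_upwards [sig_ae m] with θ hθ
    have hb : ∀ x, ‖fderiv ℝ Q x ((‖η‖ / 2) • θ)‖ₑ ≤ ENNReal.ofReal (‖η‖ / 2) * ‖fderiv ℝ Q x‖ₑ := by
      intro x
      rw [← ofReal_norm, ← ofReal_norm, ← ENNReal.ofReal_mul (by positivity)]
      apply ENNReal.ofReal_le_ofReal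
      refine ((fderiv ℝ Q x).le_opNorm _).trans (le_of_eq ?_)
      rw [norm_smul, hθ, mul_one, Real.norm_of_nonneg (by positivity), mul_comm]
    refine (enorm_add_le _ _).trans ?_
    rw [enorm_mul, enorm_mul, map_neg, enorm_neg, Tq]
    calc _ ≤ (ENNReal.ofReal (‖η‖ / 2) * ‖fderiv ℝ Q (Phi (-r) θ η)‖ₑ) * ‖Q (Phi r θ η)‖ₑ +
          ‖Q (Phi (-r) θ η)‖ₑ * (ENNReal.ofReal (‖η‖ / 2) * ‖fderiv ℝ Q (Phi r θ η)‖ₑ) :=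
          add_le_add (mul_le_mul_left (hb _) _) (mul_le_mul_right (hb _) _)
      _ = ENNReal.ofReal (‖η‖ / 2) * (‖fderiv ℝ Q (Phi (-r) θ η)‖ₑ * ‖Q (Phi r θ η)‖ₑ +
          ‖Q (Phi (-r) θ η)‖ₑ * ‖fderiv ℝ Q (Phi r θ η)‖ₑ) := by ring
      _ ≤ _ := by
        refine mul_le_mul_right ?_ _
        rw [add_assoc]
        exact le_add_self
  have hr1 : r ^ m ≤ 2 ^ m := pow_le_pow_left₀ hr0.le hr2.le m
  have hr1' : r ^ (m-1) ≤ 2 ^ m :=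
    (pow_le_pow_left₀ hr0.le hr2.le (m-1)).trans (pow_le_pow_right₀ (by norm_num) (by omega))
  have hηm : ‖η‖ ^ m / ‖η‖ ≤ ‖η‖ ^ m := div_le_self (by positivity) hη
  have hk2 : k * 2 ^ m = 2 * (‖η‖ ^ m / ‖η‖) := by
    rw [hk]; field_simp
  have b0 : |k * (r ^ m / (1 + r))| ≤ 2 * (‖η‖ ^ m / ‖η‖) := by
    rw [abs_of_nonneg (by positivity), ← hk2]
    refine mul_le_mul_of_nonneg_left ?_ hk0
    exact (div_le_self (by positivity) (by linarith)).trans hr1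
  have b1 : |k * ((m * r ^ (m - 1) * (1 + r) - r ^ m * 1) / (1 + r) ^ 2)| ≤
      (m + 1) * (2 * ‖η‖ ^ m) := by
    rw [abs_mul, abs_of_nonneg hk0]
    have : |((m * r ^ (m - 1) * (1 + r) - r ^ m * 1) / (1 + r) ^ 2 : ℝ)| ≤ ((m:ℝ)+1) * 2 ^ m := by
      have e : (((m:ℝ) * r ^ (m - 1) * (1 + r) - r ^ m * 1) / (1 + r) ^ 2) =
          m * r ^ (m-1) / (1 + r) - r ^ m / (1 + r) ^ 2 := by field_simp
      rw [e]
      refine (abs_sub _ _).trans ?_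
      rw [abs_of_nonneg (by positivity), abs_of_nonneg (by positivity), add_mul, one_mul]
      refine add_le_add ?_ ?_
      · refine (div_le_self (by positivity) (by linarith)).trans ?_
        gcongr
      · refine (div_le_self (by positivity) (by nlinarith)).trans hr1
    calc _ ≤ k * (((m:ℝ)+1) * 2 ^ m) := mul_le_mul_of_nonneg_left this hk0
      _ = ((m:ℝ)+1) * (k * 2 ^ m) := by ring
      _ ≤ _ := by rw [hk2]; gcongr
  have hT2 := half_sphere Q η r
  have hc' : ‖c‖ₑ ≤ 1 := by
    rw [← ofReal_norm, ← ENNReal.ofReal_one]; exact ENNReal.ofReal_le_ofReal hc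
  have hsm : ∀ (a : ℝ) (z : ℂ), ‖a • z‖ₑ = ENNReal.ofReal |a| * ‖z‖ₑ := by
    intro a z; rw [enorm_smul, ← ofReal_norm, Real.norm_eq_abs]
  rw [enorm_mul]
  refine (mul_le_mul_left hc' _).trans ?_
  rw [one_mul]
  refine (enorm_add_le _ _).trans ?_
  rw [hsm, hsm]
  calc _ ≤ ENNReal.ofReal (2 * (‖η‖ ^ m / ‖η‖)) * (ENNReal.ofReal (‖η‖ / 2) * T) +
        ENNReal.ofReal ((m + 1) * (2 * ‖η‖ ^ m)) * T :=
        add_le_add (mul_le_mul' (ENNReal.ofReal_le_ofReal b0) e1)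
          (mul_le_mul' (ENNReal.ofReal_le_ofReal b1) e0)
    _ = ENNReal.ofReal (‖η‖ ^ m + (m + 1) * (2 * ‖η‖ ^ m)) * T := by
        rw [← mul_assoc, ← ENNReal.ofReal_mul (by positivity), ← add_mul,
          ← ENNReal.ofReal_add (by positivity) (by positivity)]
        congr 3
        field_simp
    _ ≤ ENNReal.ofReal (‖η‖ ^ m + (m + 1) * (2 * ‖η‖ ^ m)) * (2 * _) := mul_le_mul_right hT2 _
    _ ≤ _ := by
        rw [← mul_assoc]
        refine mul_le_mul_left ?_ _
        have h2 : ∀ x : ℝ, 0 ≤ x → ENNReal.ofReal x * 2 = ENNReal.ofReal (x * 2) := by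
          intro x hx; rw [ENNReal.ofReal_mul hx]; simp
        rw [h2 _ (by positivity)]
        apply ENNReal.ofReal_le_ofReal
        have : 0 ≤ (m:ℝ) * ‖η‖ ^ m := by positivity
        nlinarith [this]

open scoped FourierTransform LineDeriv

/-- standard basis vector -/
def stdv {m : ℕ} (i : Fin (m+1)) : Euc (m+1) := EuclideanSpace.single i (1:ℝ)

lemma stdv_norm {m : ℕ} (i : Fin (m+1)) : ‖stdv i‖ = 1 := by simp [stdv]

lemma inner_stdv {m : ℕ} (x : Euc (m+1)) (i : Fin (m+1)) : inner ℝ x (stdv i) = x i := by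
  simp [stdv, EuclideanSpace.inner_single_right]

lemma clm_norm_le {m : ℕ} (L : Euc (m+1) →L[ℝ] ℂ) : ‖L‖ ≤ ∑ i, ‖L (stdv i)‖ := by
  refine L.opNorm_le_bound (by positivity) fun x => ?_
  have hx : x = ∑ i, (x i) • stdv i := by
    ext j
    simp [stdv, Finset.sum_apply, Pi.single_apply]
  have : L x = ∑ i, (x i) • L (stdv i) := by
    conv_lhs => rw [hx]
    simp [map_sum]
  rw [this, Finset.sum_mul]
  refine (norm_sum_le _ _).trans (Finset.sum_le_sum fun i _ => ?_)
  rw [norm_smul, mul_comm]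
  exact mul_le_mul_of_nonneg_left (PiLp.norm_apply_le x i) (norm_nonneg _)

lemma clm_enorm_le {m : ℕ} (L : Euc (m+1) →L[ℝ] ℂ) : ‖L‖ₑ ≤ ∑ i, ‖L (stdv i)‖ₑ := by
  have h := ENNReal.ofReal_le_ofReal (clm_norm_le L)
  rw [ENNReal.ofReal_sum_of_nonneg (fun i _ => norm_nonneg _)] at h
  simpa [ofReal_norm_eq_enorm] using h

lemma clm_enorm_sq_le {m : ℕ} (L : Euc (m+1) →L[ℝ] ℂ) :
    ‖L‖ₑ^2 ≤ ((m+1 : ℕ) : ℝ≥0∞) * ∑ i, ‖L (stdv i)‖ₑ^2 := by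
  have h1 : ‖L‖^2 ≤ ((m+1 : ℕ) : ℝ) * ∑ i, ‖L (stdv i)‖^2 := by
    have h2 := sq_sum_le_card_mul_sum_sq (s := Finset.univ) (f := fun i : Fin (m+1) => ‖L (stdv i)‖)
    have h3 := pow_le_pow_left₀ (norm_nonneg _) (clm_norm_le L) 2
    simp only [Finset.card_univ, Fintype.card_fin] at h2
    exact h3.trans h2
  have h := ENNReal.ofReal_le_ofReal h1
  rw [ENNReal.ofReal_mul (by positivity), ENNReal.ofReal_natCast,
    ENNReal.ofReal_sum_of_nonneg (fun i _ => by positivity),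
    ENNReal.ofReal_pow (norm_nonneg _), ofReal_norm_eq_enorm] at h
  refine h.trans (le_of_eq ?_)
  congr 1
  refine Finset.sum_congr rfl fun i _ => ?_
  rw [ENNReal.ofReal_pow (norm_nonneg _), ofReal_norm_eq_enorm]

/-- squared L2 norm -/
def L2q {m : ℕ} (g : SchwartzMap (Euc (m+1)) ℂ) : ℝ≥0∞ := ∫⁻ x, ‖g x‖ₑ^2

lemma L2q_meas {m : ℕ} (g : SchwartzMap (Euc (m+1)) ℂ) : Measurable (fun x => ‖g x‖ₑ^2) :=
  (g.continuous.enorm.measurable).pow_const 2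

lemma L2q_le_H1 {m : ℕ} (g : SchwartzMap (Euc (m+1)) ℂ) : L2q g ≤ H1 g :=
  lintegral_mono fun _ => le_self_add

lemma H1_le {m : ℕ} (g : SchwartzMap (Euc (m+1)) ℂ) :
    H1 g ≤ L2q g + ((m+1 : ℕ) : ℝ≥0∞) * ∑ i : Fin (m+1), L2q (∂_{stdv i} g : SchwartzMap (Euc (m+1)) ℂ) := by
  have h1 : H1 g ≤ ∫⁻ x, (‖g x‖ₑ^2 + ((m+1 : ℕ) : ℝ≥0∞) * ∑ i : Fin (m+1), ‖(∂_{stdv i} g : SchwartzMap (Euc (m+1)) ℂ) x‖ₑ^2) := by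
    refine lintegral_mono fun x => ?_
    refine add_le_add_right ?_ _
    exact clm_enorm_sq_le _
  refine h1.trans (le_of_eq ?_)
  rw [lintegral_add_left (L2q_meas g), lintegral_const_mul _
    (Finset.measurable_sum _ fun i _ => L2q_meas _),
    lintegral_finsetSum _ fun i _ => L2q_meas _]
  rfl

lemma L2q_eq {m : ℕ} (g : SchwartzMap (Euc (m+1)) ℂ) :
    L2q g = ENNReal.ofReal (∫ x, ‖g x‖^2) := by
  have hi : Integrable (fun x => ‖g x‖^2) := (g.memLp 2 volume).integrable_norm_pow (by norm_num)
  rw [ofReal_integral_eq_lintegral_ofReal hi (Eventually.of_forall fun x => by positivity)]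
  refine lintegral_congr fun x => ?_
  rw [ENNReal.ofReal_pow (norm_nonneg _), ofReal_norm_eq_enorm]

lemma planch {m : ℕ} (g : SchwartzMap (Euc (m+1)) ℂ) : L2q g = L2q (𝓕⁻ g) := by
  rw [L2q_eq, L2q_eq, ← SchwartzMap.integral_norm_sq_fourier (𝓕⁻ g)]
  simp

lemma finv_deriv {m : ℕ} (g : SchwartzMap (Euc (m+1)) ℂ) (i : Fin (m+1)) (y : Euc (m+1)) :
    ‖(𝓕⁻ (∂_{stdv i} g)) y‖ ≤ (2 * Real.pi) * (‖y‖ * ‖(𝓕⁻ g) y‖) := by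
  have ht : (fun x : Euc (m+1) => inner ℝ x (stdv i)).HasTemperateGrowth := by fun_prop
  rw [SchwartzMap.fourierInv_lineDerivOp_eq, SchwartzMap.smul_apply,
    SchwartzMap.smulLeftCLM_apply_apply ht, norm_smul, norm_smul]
  have : ‖-(2 * (Real.pi:ℂ) * Complex.I)‖ = 2 * Real.pi := by
    simp [abs_of_pos Real.pi_pos]
  rw [this]
  have h2 : ‖inner ℝ y (stdv i)‖ ≤ ‖y‖ := by
    have := norm_inner_le_norm (𝕜 := ℝ) y (stdv i)
    rwa [stdv_norm, mul_one] at this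
  have := Real.pi_pos
  gcongr

/-- the weighted norm on the physical side -/
def MB {m : ℕ} (B : SchwartzMap (Euc (m+1)) ℂ) : ℝ≥0∞ :=
  ∫⁻ y, ENNReal.ofReal ((1+‖y‖^2) * ‖B y‖)^2

lemma L2q_le_of {m : ℕ} (g B : SchwartzMap (Euc (m+1)) ℂ) (K : ℝ) (hK : 0 ≤ K)
    (h : ∀ y, ‖(𝓕⁻ g) y‖ ≤ K * ((1+‖y‖^2) * ‖B y‖)) :
    L2q g ≤ ENNReal.ofReal K ^ 2 * MB B := by
  rw [planch, L2q, MB, ← lintegral_const_mul' _ _ (by finiteness)]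
  refine lintegral_mono fun y => ?_
  simp only
  rw [← mul_pow, ← ENNReal.ofReal_mul hK, ← ofReal_norm_eq_enorm]
  gcongr
  exact h y

lemma L2q_0 {m : ℕ} (g : SchwartzMap (Euc (m+1)) ℂ) :
    L2q g ≤ ENNReal.ofReal 50 ^ 2 * MB (𝓕⁻ g) := by
  refine L2q_le_of g _ 50 (by norm_num) fun y => ?_
  have h1 := norm_nonneg ((𝓕⁻ g) y)
  have h2 := sq_nonneg ‖y‖
  nlinarith [mul_nonneg h2 h1]

lemma L2q_1 {m : ℕ} (g : SchwartzMap (Euc (m+1)) ℂ) (i : Fin (m+1)) :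
    L2q (∂_{stdv i} g) ≤ ENNReal.ofReal 50 ^ 2 * MB (𝓕⁻ g) := by
  refine L2q_le_of _ _ 50 (by norm_num) fun y => (finv_deriv g i y).trans ?_
  have h1 := norm_nonneg ((𝓕⁻ g) y)
  have h3 : ‖y‖ ≤ 1 + ‖y‖^2 := by nlinarith [sq_nonneg (‖y‖-1)]
  have := Real.pi_lt_four
  have := Real.pi_pos
  have h4 : 2 * Real.pi ≤ 50 := by linarith
  gcongr

lemma L2q_2 {m : ℕ} (g : SchwartzMap (Euc (m+1)) ℂ) (i j : Fin (m+1)) :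
    L2q (∂_{stdv i} (∂_{stdv j} g)) ≤ ENNReal.ofReal 64 ^ 2 * MB (𝓕⁻ g) := by
  refine L2q_le_of _ _ 64 (by norm_num) fun y => (finv_deriv _ i y).trans ?_
  have h1 := norm_nonneg ((𝓕⁻ g) y)
  have h2 := finv_deriv g j y
  have := Real.pi_lt_four
  have := Real.pi_pos
  calc 2 * Real.pi * (‖y‖ * ‖(𝓕⁻ (∂_{stdv j} g)) y‖)
      ≤ 8 * (‖y‖ * (8 * (‖y‖ * ‖(𝓕⁻ g) y‖))) := by
        have h8 : 2 * Real.pi ≤ 8 := by linarith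
        have h9 : ‖(𝓕⁻ (∂_{stdv j} g)) y‖ ≤ 8 * (‖y‖ * ‖(𝓕⁻ g) y‖) := h2.trans (by gcongr)
        gcongr
    _ = 64 * (‖y‖^2 * ‖(𝓕⁻ g) y‖) := by ring
    _ ≤ _ := by gcongr; linarith

lemma H1_sub {m : ℕ} (f g : SchwartzMap (Euc (m+1)) ℂ) : H1 (f - g) ≤ 2 * H1 f + 2 * H1 g := by
  have key : ∀ {F : Type} [NormedAddCommGroup F] (a b : F), ‖a - b‖ₑ^2 ≤ 2 * ‖a‖ₑ^2 + 2 * ‖b‖ₑ^2 := by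
    intro F _ a b
    have h1 : ‖a - b‖^2 ≤ 2 * ‖a‖^2 + 2*‖b‖^2 := by
      have h2 := norm_sub_le a b
      nlinarith [norm_nonneg (a-b), norm_nonneg a, norm_nonneg b, sq_nonneg (‖a‖-‖b‖)]
    have h := ENNReal.ofReal_le_ofReal h1
    rw [ENNReal.ofReal_add (by positivity) (by positivity), ENNReal.ofReal_mul (by norm_num),
      ENNReal.ofReal_mul (by norm_num), ENNReal.ofReal_pow (norm_nonneg _),
      ENNReal.ofReal_pow (norm_nonneg _), ENNReal.ofReal_pow (norm_nonneg _),
      ofReal_norm_eq_enorm, ofReal_norm_eq_enorm, ofReal_norm_eq_enorm] at h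
    simpa using h
  have hm : ∀ h : SchwartzMap (Euc (m+1)) ℂ,
      Measurable fun x => (‖h x‖ₑ^2 + ‖fderiv ℝ h x‖ₑ^2) := by
    intro h
    refine (L2q_meas h).add ?_
    exact ((h.smooth 1).continuous_fderiv (by norm_num)).enorm.measurable.pow_const 2
  unfold H1
  rw [← lintegral_const_mul _ (hm f), ← lintegral_const_mul _ (hm g),
    ← lintegral_add_left ((hm f).const_mul 2)]
  refine lintegral_mono fun x => ?_
  have e1 : fderiv ℝ (⇑(f - g)) x = fderiv ℝ f x - fderiv ℝ g x := by
    have : (⇑(f - g)) = fun x => f x - g x := by ext; simp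
    rw [this]
    exact fderiv_fun_sub f.differentiableAt g.differentiableAt
  simp only
  rw [e1, SchwartzMap.sub_apply]
  calc _ ≤ (2 * ‖f x‖ₑ^2 + 2 * ‖g x‖ₑ^2) +
        (2 * ‖fderiv ℝ f x‖ₑ^2 + 2 * ‖fderiv ℝ g x‖ₑ^2) := add_le_add (key _ _) (key _ _)
    _ = _ := by ring

/-- the multiplier -/
def Wf {m : ℕ} (β : ℝ) (j : Fin (m+1)) (x : Euc (m+1)) : ℝ :=
  (1+‖x‖^2)^(-1:ℝ) * (β * inner ℝ x (stdv j))

lemma Wf_temp {m : ℕ} (β : ℝ) (j : Fin (m+1)) : (Wf β j).HasTemperateGrowth := by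
  have h1 := Function.hasTemperateGrowth_one_add_norm_sq_rpow (Euc (m+1)) (-1)
  have h2 : (fun x : Euc (m+1) => β * inner ℝ x (stdv j)).HasTemperateGrowth := by fun_prop
  exact h1.mul h2

lemma Wf_eq {m : ℕ} (β : ℝ) (j : Fin (m+1)) (x : Euc (m+1)) :
    Wf β j x = (1+‖x‖^2)⁻¹ * (β * inner ℝ x (stdv j)) := by
  rw [Wf, Real.rpow_neg_one]

lemma Wf_bd {m : ℕ} (β : ℝ) (j : Fin (m+1)) (x : Euc (m+1)) : ‖Wf β j x‖ ≤ 3 * |β| := by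
  have h2 : ‖inner ℝ x (stdv j)‖ ≤ ‖x‖ := by
    have := norm_inner_le_norm (𝕜 := ℝ) x (stdv j)
    rwa [stdv_norm, mul_one] at this
  have h3 : 0 < 1 + ‖x‖^2 := by positivity
  rw [Wf_eq, norm_mul, norm_mul, norm_inv, Real.norm_eq_abs β, Real.norm_of_nonneg h3.le,
    inv_mul_le_iff₀ h3]
  have h4 : ‖x‖ ≤ 1 + ‖x‖^2 := by nlinarith [sq_nonneg (‖x‖-1)]
  have := abs_nonneg β
  nlinarith [mul_le_mul_of_nonneg_left (h2.trans h4) this, mul_nonneg this h3.le]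

lemma Wf_fderiv_bd {m : ℕ} (β : ℝ) (j : Fin (m+1)) (x : Euc (m+1)) :
    ‖fderiv ℝ (Wf β j) x‖ ≤ 3 * |β| := by
  have h3 : 0 < 1 + ‖x‖^2 := by positivity
  have e : Wf (m := m) β j = fun x => (1+‖x‖^2)⁻¹ * (β * inner ℝ x (stdv j)) := by
    funext x; exact Wf_eq β j x
  have hA : HasFDerivAt (fun x : Euc (m+1) => 1 + ‖x‖^2) (2 • innerSL ℝ x) x :=
    (hasStrictFDerivAt_norm_sq x).hasFDerivAt.const_add 1
  have hB : HasFDerivAt (fun x : Euc (m+1) => β * inner ℝ x (stdv j))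
      (β • innerSL ℝ (stdv j)) x := by
    have : (fun x : Euc (m+1) => β * inner ℝ x (stdv j)) = fun x => (β • innerSL ℝ (stdv j)) x := by
      funext x
      simp [real_inner_comm]
    rw [this]
    exact (β • innerSL ℝ (stdv j)).hasFDerivAt
  have hA' := (hasDerivAt_inv h3.ne').comp_hasFDerivAt x hA
  have hC := hA'.mul hB
  have e2 : (Inv.inv ∘ fun x : Euc (m+1) => 1 + ‖x‖^2) * (fun x : Euc (m+1) => β * inner ℝ x (stdv j))
     = Wf β j := by rw [e]; rfl
  have h2 : |inner ℝ x (stdv j)| ≤ ‖x‖ := by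
    have := norm_inner_le_norm (𝕜 := ℝ) x (stdv j)
    rwa [stdv_norm, mul_one] at this
  rw [← e2, hC.fderiv]
  refine (norm_add_le _ _).trans ?_
  rw [norm_smul, norm_smul, norm_smul, norm_smul]
  simp only [Function.comp, norm_mul, norm_neg, norm_inv, Real.norm_eq_abs, innerSL_apply_norm, stdv_norm,
    abs_of_pos h3, norm_pow]
  have h5 : ‖(2 • innerSL ℝ x : Euc (m+1) →L[ℝ] ℝ)‖ ≤ 2 * ‖x‖ := by
    refine (norm_nsmul_le).trans ?_
    simp
  have hi1 : (1 + ‖x‖^2)⁻¹ ≤ 1 := inv_le_one_of_one_le₀ (by nlinarith [sq_nonneg ‖x‖])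
  have hb := abs_nonneg β
  have t1 : (1 + ‖x‖^2)⁻¹ * (|β| * 1) ≤ |β| := by nlinarith
  have t2 : |β| * |inner ℝ x (stdv j)| * (((1+‖x‖^2)^2)⁻¹ * ‖(2 • innerSL ℝ x : Euc (m+1) →L[ℝ] ℝ)‖) ≤ 2 * |β| := by
    calc _ ≤ |β| * ‖x‖ * (((1+‖x‖^2)^2)⁻¹ * (2 * ‖x‖)) := by gcongr
      _ = 2 * |β| * (‖x‖^2 / (1+‖x‖^2)^2) := by field_simp
      _ ≤ 2 * |β| * 1 := by
        gcongr
        rw [div_le_one (by positivity)]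
        nlinarith [sq_nonneg ‖x‖, sq_nonneg (‖x‖^2)]
      _ = _ := by ring
  linarith

lemma H1_mul {m : ℕ} (β : ℝ) (j : Fin (m+1)) (g : SchwartzMap (Euc (m+1)) ℂ) :
    H1 (SchwartzMap.smulLeftCLM ℂ (Wf β j) g) ≤ ENNReal.ofReal (27 * β^2) * H1 g := by
  unfold H1
  rw [← lintegral_const_mul' _ _ (by finiteness)]
  refine lintegral_mono fun x => ?_
  have ht := Wf_temp (m := m) β j
  have e0 : ⇑(SchwartzMap.smulLeftCLM ℂ (Wf β j) g) = fun x => Wf β j x • g x := by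
    funext x; exact SchwartzMap.smulLeftCLM_apply_apply ht g x
  have hd : DifferentiableAt ℝ (Wf (m := m) β j) x := ht.1.differentiable (by simp) x
  simp only
  rw [e0]
  simp only
  rw [fderiv_fun_smul hd g.differentiableAt]
  have a1 : ‖Wf β j x • g x‖ ≤ 3 * |β| * ‖g x‖ := by
    rw [norm_smul]; gcongr; exact Wf_bd β j x
  have a2 : ‖Wf β j x • fderiv ℝ g x + (fderiv ℝ (Wf β j) x).smulRight (g x)‖
      ≤ 3 * |β| * ‖fderiv ℝ g x‖ + 3 * |β| * ‖g x‖ := by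
    refine (norm_add_le _ _).trans (add_le_add ?_ ?_)
    · rw [norm_smul]; gcongr; exact Wf_bd β j x
    · rw [ContinuousLinearMap.norm_smulRight_apply]; gcongr; exact Wf_fderiv_bd β j x
  rw [← ofReal_norm, ← ofReal_norm, ← ofReal_norm, ← ofReal_norm,
    ← ENNReal.ofReal_pow (norm_nonneg _), ← ENNReal.ofReal_pow (norm_nonneg _),
    ← ENNReal.ofReal_pow (norm_nonneg _), ← ENNReal.ofReal_pow (norm_nonneg _),
    ← ENNReal.ofReal_add (by positivity) (by positivity),
    ← ENNReal.ofReal_add (by positivity) (by positivity), ← ENNReal.ofReal_mul (by positivity)]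
  apply ENNReal.ofReal_le_ofReal
  have b1 := pow_le_pow_left₀ (norm_nonneg _) a1 2
  have b2 := pow_le_pow_left₀ (norm_nonneg _) a2 2
  have hb : |β|^2 = β^2 := sq_abs β
  rw [← hb]
  nlinarith [sq_nonneg (|β| * ‖fderiv ℝ g x‖ - |β| * ‖g x‖)]


open scoped FourierTransform LineDeriv

lemma jap_rpow {n : ℕ} (β : ℝ) (x : Euc n) : jap x ^ β = (1+‖x‖^2)^(β/2) := by
  rw [jap, Real.sqrt_eq_rpow, ← Real.rpow_mul (by positivity)]
  congr 1; ring

lemma exists_Q {m : ℕ} (q : SchwartzMap (Euc (m+1)) ℂ) :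
    ∃ Q : SchwartzMap (Euc (m+1)) ℂ, ∀ ξ, ft q ξ = Q ξ := by
  have hpi : (2 * Real.pi)⁻¹ ≠ 0 := by positivity
  refine ⟨SchwartzMap.compCLMOfContinuousLinearEquiv ℂ
    (ContinuousLinearEquiv.smulLeft (R₁ := ℝ) (M₁ := Euc (m+1)) (Units.mk0 (2 * Real.pi)⁻¹ hpi)) (𝓕 q), fun ξ => ?_⟩
  rw [SchwartzMap.compCLMOfContinuousLinearEquiv_apply]
  change _ = (𝓕 q) ((2 * Real.pi)⁻¹ • ξ)
  rw [SchwartzMap.fourier_coe, Real.fourier_eq', ft]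
  refine integral_congr_ae (Eventually.of_forall fun x => ?_)
  simp only [smul_eq_mul]
  congr 2
  rw [inner_smul_right, real_inner_comm]
  have : -2 * Real.pi * ((2 * Real.pi)⁻¹ * inner ℝ x ξ) = - inner ℝ x ξ := by
    have := Real.pi_pos
    field_simp
  rw [this]
  push_cast
  ring

lemma bessel_eq {m : ℕ} (β : ℝ) (q G : SchwartzMap (Euc (m+1)) ℂ)
    (hG : ∀ ξ, G ξ = ((jap ξ ^ β : ℝ) : ℂ) * ft q ξ) (y : Euc (m+1)) :
    besselD β q ((2 * Real.pi) • y) = (((2 * Real.pi) ^ (m+1) : ℝ)⁻¹ : ℝ) • (𝓕⁻ G) y := by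
  rw [besselD, SchwartzMap.fourierInv_coe, Real.fourierInv_eq']
  congr 1
  refine integral_congr_ae (Eventually.of_forall fun x => ?_)
  simp only [smul_eq_mul]
  rw [hG]
  congr 2
  rw [inner_smul_right]
  ring

lemma scale_lint {m : ℕ} (F : Euc (m+1) → ℝ≥0∞) :
    ∫⁻ y, F ((2 * Real.pi) • y) =
      ENNReal.ofReal ((2 * Real.pi)^(m+1))⁻¹ * ∫⁻ x, F x := by
  have hpi : (2 * Real.pi) ≠ 0 := by positivity
  have h := Measure.map_addHaar_smul (volume : Measure (Euc (m+1))) hpi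
  have h2 := (Homeomorph.smulOfNeZero (2 * Real.pi) hpi (α := Euc (m+1))).measurableEmbedding.lintegral_map
    (μ := volume) F
  have e : ⇑(Homeomorph.smulOfNeZero (2 * Real.pi) hpi (α := Euc (m+1))) = fun x => (2 * Real.pi) • x := rfl
  rw [e, h, lintegral_smul_measure] at h2
  rw [← h2]
  simp only [finrank_euclideanSpace, Fintype.card_fin, smul_eq_mul]
  rw [abs_of_pos (by positivity)]

lemma MB_le {m : ℕ} (β : ℝ) (q G : SchwartzMap (Euc (m+1)) ℂ)
    (hG : ∀ ξ, G ξ = ((jap ξ ^ β : ℝ) : ℂ) * ft q ξ) :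
    MB (𝓕⁻ G) ≤ ENNReal.ofReal ((2 * Real.pi)^(m+1)) * wSobNorm β 2 q ^ 2 := by
  obtain ⟨F, hF⟩ : ∃ F : Euc (m+1) → ℝ≥0∞, ∀ x, F x = ‖(jap x ^ (2:ℝ) : ℝ) • besselD β q x‖ₑ^2 :=
    ⟨_, fun _ => rfl⟩
  have hw : wSobNorm β 2 q ^ 2 = ∫⁻ x, F x := by
    rw [wSobNorm, eLpNorm_eq_lintegral_rpow_enorm_toReal (by norm_num) (by norm_num)]
    simp only [hF, ENNReal.toReal_ofNat, ENNReal.rpow_ofNat]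
    rw [← ENNReal.rpow_natCast, ← ENNReal.rpow_mul]
    norm_num
  have hp : (0:ℝ) < (2 * Real.pi)^(m+1) := by positivity
  have h1 : ENNReal.ofReal ((2 * Real.pi)^(m+1))⁻¹ ^ 2 * MB (𝓕⁻ G) ≤ ∫⁻ y, F ((2 * Real.pi) • y) := by
    rw [MB, ← lintegral_const_mul' _ _ (by finiteness)]
    refine lintegral_mono fun y => ?_
    simp only
    rw [hF, bessel_eq β q G hG, ← mul_pow, ← ENNReal.ofReal_mul (by positivity), ← ofReal_norm]
    gcongr
    rw [norm_smul, norm_smul, Real.norm_of_nonneg (inv_pos.2 hp).le, Real.rpow_two, jap_sq,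
      Real.norm_of_nonneg (by positivity)]
    have : ‖y‖ ≤ ‖(2 * Real.pi) • y‖ := by
      rw [norm_smul, Real.norm_of_nonneg (by positivity)]
      nlinarith [norm_nonneg y, Real.pi_gt_three]
    calc _ = (1 + ‖y‖^2) * (((2 * Real.pi)^(m+1))⁻¹ * ‖(𝓕⁻ G) y‖) := by ring
      _ ≤ _ := by gcongr
  rw [scale_lint, ← hw] at h1
  set P := ENNReal.ofReal ((2 * Real.pi)^(m+1)) with hP
  have hP0 : P ≠ 0 := by simp [hP, hp]
  have hPt : P ≠ ⊤ := by simp [hP]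
  rw [ENNReal.ofReal_inv_of_pos hp, ← hP] at h1
  have h2 : P^2 * ((P⁻¹)^2 * MB (𝓕⁻ G)) ≤ P^2 * (P⁻¹ * wSobNorm β 2 q ^ 2) := by gcongr
  have e1 : P^2 * ((P⁻¹)^2 * MB (𝓕⁻ G)) = MB (𝓕⁻ G) := by
    rw [← mul_assoc, ← mul_pow, ENNReal.mul_inv_cancel hP0 hPt, one_pow, one_mul]
  have e2 : P^2 * (P⁻¹ * wSobNorm β 2 q ^ 2) = P * wSobNorm β 2 q ^ 2 := by
    rw [pow_two, mul_assoc P P, ← mul_assoc P P⁻¹, ENNReal.mul_inv_cancel hP0 hPt, one_mul]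
  rw [e1, e2] at h2
  exact h2

lemma fourier_pack (m : ℕ) (β : ℝ) : ∃ C : ℝ≥0∞, C ≠ ⊤ ∧ ∀ q : SchwartzMap (Euc (m+1)) ℂ,
    ∃ Q G : SchwartzMap (Euc (m+1)) ℂ, ∃ Gj : Fin (m+1) → SchwartzMap (Euc (m+1)) ℂ,
      (∀ ξ, ft q ξ = Q ξ) ∧
      (∀ ξ, ‖Q ξ‖ₑ = ENNReal.ofReal (jap ξ ^ (-β)) * ‖G ξ‖ₑ) ∧
      (∀ ξ, ‖fderiv ℝ Q ξ‖ₑ ≤ ∑ j, ENNReal.ofReal (jap ξ ^ (-β)) * ‖Gj j ξ‖ₑ) ∧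
      H1 G ≤ C * wSobNorm β 2 q ^ 2 ∧ ∀ j, H1 (Gj j) ≤ C * wSobNorm β 2 q ^ 2 := by
  obtain ⟨N, hN⟩ : ∃ N : ℝ≥0∞, N = ((m+1 : ℕ) : ℝ≥0∞) := ⟨_, rfl⟩
  have hNt : N ≠ ⊤ := by rw [hN]; finiteness
  obtain ⟨K, hK⟩ : ∃ K : ℝ≥0∞, K = ENNReal.ofReal 64 ^ 2 := ⟨_, rfl⟩
  have hKt : K ≠ ⊤ := by rw [hK]; finiteness
  obtain ⟨A, hA⟩ : ∃ A : ℝ≥0∞, A = K + N * (N * K) := ⟨_, rfl⟩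
  have hAt : A ≠ ⊤ := by rw [hA]; finiteness
  obtain ⟨A', hA'⟩ : ∃ A' : ℝ≥0∞, A' = A + (2 * A + 2 * (ENNReal.ofReal (27 * β^2) * A)) := ⟨_, rfl⟩
  have hAt' : A' ≠ ⊤ := by rw [hA']; finiteness
  refine ⟨A' * ENNReal.ofReal ((2 * Real.pi)^(m+1)), by finiteness, fun q => ?_⟩
  obtain ⟨Q, hQ⟩ := exists_Q q
  have ht := Function.hasTemperateGrowth_one_add_norm_sq_rpow (Euc (m+1)) (β/2)
  obtain ⟨G, hG⟩ : ∃ G : SchwartzMap (Euc (m+1)) ℂ, ∀ ξ, G ξ = ((1+‖ξ‖^2)^(β/2) : ℝ) • Q ξ :=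
    ⟨SchwartzMap.smulLeftCLM ℂ (fun x : Euc (m+1) => (1+‖x‖^2)^(β/2)) Q,
      fun ξ => SchwartzMap.smulLeftCLM_apply_apply ht Q ξ⟩
  have hQG : ∀ ξ, Q ξ = ((1+‖ξ‖^2)^(-(β/2)) : ℝ) • G ξ := by
    intro ξ
    rw [hG, smul_smul, ← Real.rpow_add (by positivity)]
    simp
  have hG2 : ∀ ξ, G ξ = ((jap ξ ^ β : ℝ) : ℂ) * ft q ξ := by
    intro ξ
    rw [hG, jap_rpow, hQ, Complex.real_smul]
  have hjap : ∀ ξ : Euc (m+1), jap ξ ^ (-β) = (1+‖ξ‖^2)^(-(β/2)) := by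
    intro ξ; rw [jap_rpow]; congr 1; ring
  have hM := MB_le β q G hG2
  have hK50 : ENNReal.ofReal 50 ^ 2 ≤ K := by
    rw [hK]; gcongr; norm_num
  have l0 : L2q G ≤ K * MB (𝓕⁻ G) := (L2q_0 G).trans (by gcongr)
  have l1 : ∀ i : Fin (m+1), L2q (∂_{stdv i} G : SchwartzMap (Euc (m+1)) ℂ) ≤ K * MB (𝓕⁻ G) :=
    fun i => (L2q_1 G i).trans (by gcongr)
  have l2 : ∀ i j : Fin (m+1), L2q (∂_{stdv i} (∂_{stdv j} G : SchwartzMap (Euc (m+1)) ℂ) : SchwartzMap (Euc (m+1)) ℂ) ≤ K * MB (𝓕⁻ G) := by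
    intro i j; rw [hK]; exact L2q_2 G i j
  have hsum : ∀ f : Fin (m+1) → ℝ≥0∞, (∀ i, f i ≤ K * MB (𝓕⁻ G)) → ∑ i, f i ≤ N * (K * MB (𝓕⁻ G)) := by
    intro f hf
    refine (Finset.sum_le_sum fun i _ => hf i).trans (le_of_eq ?_)
    simp [hN]
  have hcomb : ∀ g : SchwartzMap (Euc (m+1)) ℂ, L2q g ≤ K * MB (𝓕⁻ G) →
      (∀ i : Fin (m+1), L2q (∂_{stdv i} g : SchwartzMap (Euc (m+1)) ℂ) ≤ K * MB (𝓕⁻ G)) →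
      H1 g ≤ A * MB (𝓕⁻ G) := by
    intro g h0 h1
    refine (H1_le g).trans ?_
    rw [hA, ← hN]
    calc _ ≤ K * MB (𝓕⁻ G) + N * (N * (K * MB (𝓕⁻ G))) := by
          gcongr; exact hsum _ h1
      _ = _ := by ring
  have hH := hcomb G l0 l1
  have hHj : ∀ j : Fin (m+1), H1 (∂_{stdv j} G : SchwartzMap (Euc (m+1)) ℂ) ≤ A * MB (𝓕⁻ G) :=
    fun j => hcomb _ (l1 j) (fun i => l2 i j)
  refine ⟨Q, G, fun j => (∂_{stdv j} G : SchwartzMap (Euc (m+1)) ℂ) - SchwartzMap.smulLeftCLM ℂ (Wf β j) G,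
    hQ, ?_, ?_, ?_, ?_⟩
  · intro ξ
    rw [hQG, enorm_smul, hjap]
    congr 1
    rw [← ofReal_norm, Real.norm_of_nonneg (by positivity)]
  · intro ξ
    refine (clm_enorm_le _).trans (Finset.sum_le_sum fun j _ => le_of_eq ?_)
    have h3 : 0 < 1 + ‖ξ‖^2 := by positivity
    have hA1 : HasFDerivAt (fun x : Euc (m+1) => 1 + ‖x‖^2) (2 • innerSL ℝ ξ) ξ :=
      (hasStrictFDerivAt_norm_sq ξ).hasFDerivAt.const_add 1
    have hA2 := hA1.rpow_const (p := -(β/2)) (Or.inl h3.ne')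
    have hA3 := hA2.smul G.differentiableAt.hasFDerivAt
    have e0 : ((fun x : Euc (m+1) => ((1+‖x‖^2)^(-(β/2)) : ℝ)) • ⇑G) = ⇑Q := by
      funext x; exact (hQG x).symm
    rw [e0] at hA3
    rw [hA3.fderiv]
    have e1 : ((∂_{stdv j} G : SchwartzMap (Euc (m+1)) ℂ) - SchwartzMap.smulLeftCLM ℂ (Wf β j) G) ξ
        = fderiv ℝ G ξ (stdv j) - Wf β j ξ • G ξ := by
      rw [sub_apply, SchwartzMap.smulLeftCLM_apply_apply (Wf_temp β j)]
      rfl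
    rw [e1, hjap]
    have e2 : ENNReal.ofReal ((1+‖ξ‖^2)^(-(β/2))) = ‖((1+‖ξ‖^2)^(-(β/2)) : ℝ)‖ₑ := by
      rw [← ofReal_norm, Real.norm_of_nonneg (by positivity)]
    rw [e2, ← enorm_smul]
    congr 1
    have e3 : (1+‖ξ‖^2)^(-(β/2) - 1) = (1+‖ξ‖^2)^(-(β/2)) * (1+‖ξ‖^2)⁻¹ := by
      rw [Real.rpow_sub_one h3.ne']; rfl
    rw [e3, Wf_eq]
    simp only [ContinuousLinearMap.add_apply, ContinuousLinearMap.smul_apply,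
      ContinuousLinearMap.smulRight_apply, innerSL_apply_apply, Complex.real_smul, smul_eq_mul, nsmul_eq_mul]
    push_cast
    ring
  · refine hH.trans ?_
    calc _ ≤ A' * MB (𝓕⁻ G) := by gcongr; rw [hA']; exact le_self_add
      _ ≤ _ := by rw [mul_assoc]; gcongr
  · intro j
    refine (H1_sub _ _).trans ?_
    calc _ ≤ 2 * (A * MB (𝓕⁻ G)) + 2 * (ENNReal.ofReal (27 * β^2) * (A * MB (𝓕⁻ G))) := by
          gcongr
          · exact hHj j
          · exact (H1_mul β j G).trans (by gcongr)
      _ = (2 * A + 2 * (ENNReal.ofReal (27 * β^2) * A)) * MB (𝓕⁻ G) := by ring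
      _ ≤ A' * MB (𝓕⁻ G) := by gcongr; rw [hA']; exact le_add_self
      _ ≤ _ := by rw [mul_assoc]; gcongr

lemma enn_sq_sum {ι : Type*} [Fintype ι] (f : ι → ℝ≥0∞) :
    (∑ i, f i)^2 ≤ (Fintype.card ι : ℝ≥0∞) * ∑ i, f i ^ 2 := by
  by_cases h : ∀ i, f i ≠ ⊤
  · lift f to ι → NNReal using h
    have := sq_sum_le_card_mul_sum_sq (s := Finset.univ) (f := f)
    rw [Finset.card_univ] at this
    beta_reduce
    exact_mod_cast this
  · push Not at h
    obtain ⟨i, hi⟩ := h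
    have h1 : ∑ i, f i ^ 2 = ⊤ := by
      rw [ENNReal.sum_eq_top]
      exact ⟨i, Finset.mem_univ _, by simp [hi]⟩
    have h2 : (Fintype.card ι : ℝ≥0∞) ≠ 0 := by
      have : Nonempty ι := ⟨i⟩
      exact_mod_cast Fintype.card_ne_zero
    rw [h1, ENNReal.mul_top h2]
    exact le_top

/-- the bilinear integrand -/
def Ei {m : ℕ} (β r : ℝ) (g1 g2 : SchwartzMap (Euc (m+1)) ℂ) (η θ : Euc (m+1)) : ℝ≥0∞ :=
  ‖g1 (Phi (-r) θ η)‖ₑ * (ENNReal.ofReal (jap (Phi (-r) θ η) ^ (-β)) *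
          (ENNReal.ofReal (jap (Phi r θ η) ^ (-β)) * ‖g2 (Phi r θ η)‖ₑ))

lemma Ei_meas {m : ℕ} (β r : ℝ) (g1 g2 : SchwartzMap (Euc (m+1)) ℂ) :
    Measurable (fun p : Euc (m+1) × Euc (m+1) => Ei β r g1 g2 p.1 p.2) := by
  have hP : ∀ s, Measurable (fun p : Euc (m+1) × Euc (m+1) => Phi s p.2 p.1) := fun s =>
    (Phi_cont s).measurable.comp measurable_swap
  have hj : ∀ s, Measurable (fun p : Euc (m+1) × Euc (m+1) =>
      ENNReal.ofReal (jap (Phi s p.2 p.1) ^ (-β))) := fun s =>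
    ((jap_meas.comp (hP s)).pow_const (-β)).ennreal_ofReal
  have hg : ∀ (g : SchwartzMap (Euc (m+1)) ℂ) s, Measurable (fun p : Euc (m+1) × Euc (m+1) =>
      ‖g (Phi s p.2 p.1)‖ₑ) := fun g s => g.continuous.enorm.measurable.comp (hP s)
  exact (hg g1 _).mul ((hj _).mul ((hj _).mul (hg g2 _)))

lemma Ei_meas1 {m : ℕ} (β r : ℝ) (g1 g2 : SchwartzMap (Euc (m+1)) ℂ) (η : Euc (m+1)) :
    Measurable (fun θ : Euc (m+1) => Ei β r g1 g2 η θ) := by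
  have h1 : Measurable (fun θ : Euc (m+1) => ((η, θ) : Euc (m+1) × Euc (m+1))) :=
    measurable_const.prodMk measurable_id
  have h := Measurable.comp (Ei_meas β r g1 g2) h1
  exact h

/-- its spherical integral -/
def Eint {m : ℕ} (β r : ℝ) (g1 g2 : SchwartzMap (Euc (m+1)) ℂ) (η : Euc (m+1)) : ℝ≥0∞ :=
  ∫⁻ θ in {θ | ⟪η, θ⟫ ≤ 0}, Ei β r g1 g2 η θ ∂(sig m)

lemma Eint_meas {m : ℕ} (β r : ℝ) (g1 g2 : SchwartzMap (Euc (m+1)) ℂ) :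
    Measurable (Eint β r g1 g2) := by
  have hS : MeasurableSet {p : Euc (m+1) × Euc (m+1) | ⟪p.1, p.2⟫ ≤ 0} :=
    (isClosed_le (by fun_prop) continuous_const).measurableSet
  have h := ((Ei_meas β r g1 g2).indicator hS).lintegral_prod_right' (ν := sig m)
  have e : Eint β r g1 g2 = fun η => ∫⁻ θ, {p : Euc (m+1) × Euc (m+1) | ⟪p.1, p.2⟫ ≤ 0}.indicator
      (fun p => Ei β r g1 g2 p.1 p.2) (η, θ) ∂(sig m) := by
    funext η
    have hs : MeasurableSet {θ : Euc (m+1) | ⟪η, θ⟫ ≤ 0} :=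
      (isClosed_le (by fun_prop) continuous_const).measurableSet
    rw [Eint, ← lintegral_indicator hs]
    rfl
  rw [e]
  exact h

lemma core (m : ℕ) (hm : 1 ≤ m) (δ : ℝ) (hδ0 : 0 < δ) (hδ1 : δ < 1)
    (β α b : ℝ) (hb : 0 ≤ b) (hbβ : b ≤ β)
    (hbm : 2 * b < m) (hex : m + 2 * (α - 1) - 2 * β - 2 * b ≤ 0)
    (χ : Euc (m+1) → ℝ) (hχ01 : ∀ ξ, χ ξ ∈ Set.Icc (0 : ℝ) 1)
    (hχ0 : ∀ ξ : Euc (m+1), ‖ξ‖ < 1 → χ ξ = 0) :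
    ∃ D : ℝ≥0∞, D ≠ ⊤ ∧ ∀ (q : SchwartzMap (Euc (m+1)) ℂ) (r : ℝ), r ∈ Set.Ioo (1 - δ) (1 + δ) →
      ∫⁻ η : Euc (m+1), ‖(jap η ^ (α - 1) : ℝ) •
            deriv (fun s : ℝ => (χ η : ℂ) * Sr s (⇑q) η) r‖ₑ^2
          ≤ D * (wSobNorm β 2 (⇑q) ^ 2) ^ 2 := by
  obtain ⟨C1, hC1, H⟩ := bilin m δ hδ0 hδ1 β α b hb hbβ hbm hex
  obtain ⟨C2, hC2, F⟩ := fourier_pack m β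
  obtain ⟨N, hN⟩ : ∃ N : ℝ≥0∞, N = (Fintype.card (Option (Fin (m+1)) × Option (Fin (m+1))) : ℝ≥0∞) :=
    ⟨_, rfl⟩
  have hNt : N ≠ ⊤ := by rw [hN]; finiteness
  refine ⟨ENNReal.ofReal (6*(m+1))^2 * N * (N * (C1 * (C2 * C2))), by finiteness, fun q r hr => ?_⟩
  obtain ⟨Q, G, Gj, hQ, hQG, hDQ, hG, hGj⟩ := F q
  obtain ⟨Gs, hGs0, hGs1⟩ : ∃ Gs : Option (Fin (m+1)) → SchwartzMap (Euc (m+1)) ℂ,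
      Gs none = G ∧ ∀ j, Gs (some j) = Gj j :=
    ⟨fun o => o.elim G Gj, rfl, fun _ => rfl⟩
  have hGsH : ∀ a, H1 (Gs a) ≤ C2 * wSobNorm β 2 q ^ 2 := by
    rintro (_ | j)
    · rw [hGs0]; exact hG
    · rw [hGs1]; exact hGj j
  have hr0 : r ∈ Ioo (0:ℝ) 2 := ⟨by linarith [hr.1], by linarith [hr.2]⟩
  have hsumQ : ∀ ξ, ‖Q ξ‖ₑ + ‖fderiv ℝ Q ξ‖ₑ ≤ ∑ a, ENNReal.ofReal (jap ξ ^ (-β)) * ‖Gs a ξ‖ₑ := by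
    intro ξ
    rw [Fintype.sum_option, hGs0]
    simp only [hGs1]
    exact add_le_add (hQG ξ).le (hDQ ξ)
  have hTq : ∀ η θ, Tq Q (Phi (-r) θ η) (Phi r θ η) ≤
      ∑ p : Option (Fin (m+1)) × Option (Fin (m+1)), Ei β r (Gs p.1) (Gs p.2) η θ := by
    intro η θ
    calc _ ≤ (‖Q (Phi (-r) θ η)‖ₑ + ‖fderiv ℝ Q (Phi (-r) θ η)‖ₑ) *
          (‖Q (Phi r θ η)‖ₑ + ‖fderiv ℝ Q (Phi r θ η)‖ₑ) := by
          rw [Tq]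
          set a := ‖Q (Phi (-r) θ η)‖ₑ
          set b := ‖fderiv ℝ Q (Phi (-r) θ η)‖ₑ
          set c := ‖Q (Phi r θ η)‖ₑ
          set d := ‖fderiv ℝ Q (Phi r θ η)‖ₑ
          have : (a + b) * (c + d) = (a * c + b * c + a * d) + b * d := by ring
          rw [this]
          exact le_self_add
      _ ≤ _ := mul_le_mul' (hsumQ _) (hsumQ _)
      _ = _ := by
        rw [Fintype.sum_mul_sum, Fintype.sum_prod_type]
        refine Finset.sum_congr rfl fun a _ => Finset.sum_congr rfl fun b _ => ?_
        rw [Ei]; ring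
  have h_int : ∀ η, ∫⁻ θ in {θ | ⟪η, θ⟫ ≤ 0}, Tq Q (Phi (-r) θ η) (Phi r θ η) ∂(sig m) ≤
      ∑ p : Option (Fin (m+1)) × Option (Fin (m+1)), Eint β r (Gs p.1) (Gs p.2) η := by
    intro η
    have hme : ∀ p : Option (Fin (m+1)) × Option (Fin (m+1)),
        Measurable (fun θ => Ei β r (Gs p.1) (Gs p.2) η θ) := fun p =>
      Ei_meas1 β r (Gs p.1) (Gs p.2) η
    refine (lintegral_mono fun θ => hTq η θ).trans (le_of_eq ?_)
    rw [lintegral_finsetSum _ fun p _ => hme p]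
    simp only [Eint]
  have hpt : ∀ η, ‖(jap η ^ (α - 1) : ℝ) •
            deriv (fun s : ℝ => (χ η : ℂ) * Sr s (⇑q) η) r‖ₑ^2 ≤
      {η : Euc (m+1) | 1 ≤ ‖η‖}.indicator (fun η => ENNReal.ofReal (6*(m+1))^2 * N *
        ∑ p : Option (Fin (m+1)) × Option (Fin (m+1)), ENNReal.ofReal (jap η ^ (2 * (α - 1)) * ‖η‖ ^ (2 * m)) *
          Eint β r (Gs p.1) (Gs p.2) η ^ 2) η := by
    intro η
    by_cases hη : 1 ≤ ‖η‖
    · rw [indicator_of_mem (show η ∈ {η : Euc (m+1) | 1 ≤ ‖η‖} from hη)]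
      have hc : ‖(χ η : ℂ)‖ ≤ 1 := by
        rw [Complex.norm_real, Real.norm_of_nonneg (hχ01 η).1]; exact (hχ01 η).2
      have h1 := (deriv_Sr q Q hQ η hη r hr0 (χ η : ℂ) hc).trans (mul_le_mul_right (h_int η) _)
      have hj : 0 < jap η := jap_pos η
      have e1 : ‖(jap η ^ (α - 1) : ℝ)‖ₑ = ENNReal.ofReal (jap η ^ (α - 1)) := by
        rw [← ofReal_norm, Real.norm_of_nonneg (by positivity)]
      rw [enorm_smul, mul_pow, e1, ← Finset.mul_sum]
      have h2 := enn_sq_sum fun p : Option (Fin (m+1)) × Option (Fin (m+1)) => Eint β r (Gs p.1) (Gs p.2) η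
      rw [← hN] at h2
      have e2 : ENNReal.ofReal (jap η ^ (2 * (α - 1)) * ‖η‖ ^ (2 * m)) =
          ENNReal.ofReal (jap η ^ (α - 1)) ^ 2 * ENNReal.ofReal (‖η‖ ^ m) ^ 2 := by
        rw [← ENNReal.ofReal_pow (by positivity), ← ENNReal.ofReal_pow (by positivity),
          ← ENNReal.ofReal_mul (by positivity)]
        congr 2
        · rw [← Real.rpow_natCast, ← Real.rpow_mul hj.le]; congr 1; push_cast; ring
        · rw [← pow_mul, mul_comm]
      have e3 : ENNReal.ofReal (6*(m+1)*‖η‖^m) = ENNReal.ofReal (6*(m+1)) * ENNReal.ofReal (‖η‖^m) :=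
        ENNReal.ofReal_mul (by positivity)
      rw [e3] at h1
      rw [e2]
      have h3 := pow_le_pow_left' h1 2
      calc _ ≤ ENNReal.ofReal (jap η ^ (α - 1)) ^ 2 * _ := mul_le_mul_right h3 _
        _ = ENNReal.ofReal (jap η ^ (α - 1)) ^ 2 * ((ENNReal.ofReal (6*(m+1)) * ENNReal.ofReal (‖η‖^m))^2
            * (∑ p : Option (Fin (m+1)) × Option (Fin (m+1)), Eint β r (Gs p.1) (Gs p.2) η)^2) := by
            rw [mul_pow]
        _ ≤ ENNReal.ofReal (jap η ^ (α - 1)) ^ 2 * ((ENNReal.ofReal (6*(m+1)) * ENNReal.ofReal (‖η‖^m))^2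
            * _) := mul_le_mul_right (mul_le_mul_right h2 _) _
        _ = _ := by ring
    · rw [hχ0 η (not_le.1 hη)]
      simp
  have hbil : ∀ p : Option (Fin (m+1)) × Option (Fin (m+1)),
      ∫⁻ η in {η : Euc (m+1) | 1 ≤ ‖η‖}, ENNReal.ofReal (jap η ^ (2 * (α - 1)) * ‖η‖ ^ (2 * m)) *
          Eint β r (Gs p.1) (Gs p.2) η ^ 2 ≤ C1 * (C2 * C2) * (wSobNorm β 2 q ^ 2)^2 := by
    intro p
    refine (H (Gs p.1) (Gs p.2) r hr).trans ?_
    calc _ ≤ C1 * ((C2 * wSobNorm β 2 q ^ 2) * (C2 * wSobNorm β 2 q ^ 2)) := by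
          refine mul_le_mul_right (mul_le_mul' (hGsH _) ?_) _
          exact (L2q_le_H1 _).trans (hGsH _)
      _ = _ := by ring
  have hms : ∀ p : Option (Fin (m+1)) × Option (Fin (m+1)), Measurable (fun η : Euc (m+1) =>
      ENNReal.ofReal (jap η ^ (2 * (α - 1)) * ‖η‖ ^ (2 * m)) * Eint β r (Gs p.1) (Gs p.2) η ^ 2) := by
    intro p
    refine Measurable.mul ?_ ((Eint_meas _ _ _ _).pow_const 2)
    exact ((jap_meas.pow_const _).mul (by fun_prop)).ennreal_ofReal
  refine (lintegral_mono hpt).trans ?_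
  rw [lintegral_indicator (measurableSet_le measurable_const measurable_norm),
    lintegral_const_mul _ (Finset.measurable_sum _ fun p _ => hms p),
    lintegral_finsetSum _ fun p _ => hms p]
  calc _ ≤ ENNReal.ofReal (6*(m+1))^2 * N *
        ∑ p : Option (Fin (m+1)) × Option (Fin (m+1)), C1 * (C2 * C2) * (wSobNorm β 2 q ^ 2)^2 :=
        mul_le_mul_right (Finset.sum_le_sum fun p _ => hbil p) _
    _ = _ := by
      rw [Finset.sum_const, Finset.card_univ, nsmul_eq_mul, ← hN]; ring

/-- weighted `L²_{α-1}` estimate for `∂_r(χ·S_r(q))` for `r ∈ (1-δ, 1+δ)`. -/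
theorem stmt7 (n : ℕ) (hn : 2 ≤ n) (δ : ℝ) (hδ0 : 0 < δ) (hδ1 : δ < 1)
    (β α : ℝ) (hβ : 0 ≤ β)
    (hrange : (((n : ℝ) - 3) / 2 < β ∧ β < ((n : ℝ) - 1) / 2 ∧
        α ≤ 2 * β - ((n : ℝ) - 3) / 2) ∨
      (((n : ℝ) - 1) / 2 ≤ β ∧ α < β + 1))
    (C₀ : ℝ) (hC₀ : 1 ≤ C₀) (χ : Euc n → ℝ) (hχsm : ContDiff ℝ (⊤ : ℕ∞) χ)
    (hχ01 : ∀ ξ, χ ξ ∈ Set.Icc (0 : ℝ) 1)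
    (hχ1 : ∀ ξ : Euc n, 2 * C₀ < ‖ξ‖ → χ ξ = 1)
    (hχ0 : ∀ ξ : Euc n, ‖ξ‖ < C₀ → χ ξ = 0) :
    ∃ C : ℝ, 0 < C ∧
      ∀ (q : SchwartzMap (Euc n) ℂ) (r : ℝ), r ∈ Set.Ioo (1 - δ) (1 + δ) →
        eLpNorm (fun η : Euc n => (jap η ^ (α - 1) : ℝ) •
            deriv (fun s : ℝ => (χ η : ℂ) * Sr s (⇑q) η) r) 2 volume
          ≤ ENNReal.ofReal C * (wSobNorm β 2 (⇑q)) ^ 2 := by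
  obtain ⟨m, rfl⟩ : ∃ m, n = m + 1 := ⟨n - 1, by omega⟩
  have hm : 1 ≤ m := by omega
  have hm' : (1:ℝ) ≤ m := by exact_mod_cast hm
  push_cast at hrange
  obtain ⟨b, hb, hbβ, hbm, hex⟩ : ∃ b : ℝ, 0 ≤ b ∧ b ≤ β ∧ 2 * b < m ∧
      m + 2 * (α - 1) - 2 * β - 2 * b ≤ 0 := by
    rcases hrange with ⟨h1, h2, h3⟩ | ⟨h1, h2⟩
    · exact ⟨β, hβ, le_rfl, by linarith, by linarith⟩
    · have hmin : 0 < min ((m:ℝ)/2) (β + 1 - α) := lt_min (by linarith) (by linarith)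
      have a1 := min_le_left ((m:ℝ)/2) (β + 1 - α)
      have a2 := min_le_right ((m:ℝ)/2) (β + 1 - α)
      exact ⟨m/2 - min ((m:ℝ)/2) (β + 1 - α), by linarith, by linarith, by linarith, by linarith⟩
  obtain ⟨D, hD, H⟩ := core m hm δ hδ0 hδ1 β α b hb hbβ hbm hex χ hχ01
    (fun ξ h => hχ0 ξ (h.trans_le hC₀))
  refine ⟨D.toReal + 1, by positivity, fun q r hr => ?_⟩
  rw [eLpNorm_eq_lintegral_rpow_enorm_toReal (by norm_num) (by norm_num)]
  simp only [ENNReal.toReal_ofNat, ENNReal.rpow_ofNat]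
  have h1 := H q r hr
  have h2 : D ≤ ENNReal.ofReal (D.toReal + 1) ^ 2 := by
    calc D = ENNReal.ofReal D.toReal := (ENNReal.ofReal_toReal hD).symm
      _ ≤ ENNReal.ofReal ((D.toReal + 1)^2) := by
        apply ENNReal.ofReal_le_ofReal
        nlinarith [ENNReal.toReal_nonneg (a := D)]
      _ = _ := ENNReal.ofReal_pow (by positivity) 2
  have h3 := h1.trans (mul_le_mul_left h2 _)
  rw [← mul_pow] at h3
  have h4 := ENNReal.rpow_le_rpow h3 (by norm_num : (0:ℝ) ≤ 1/2)
  refine h4.trans (le_of_eq ?_)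
  rw [← ENNReal.rpow_natCast, ← ENNReal.rpow_mul]
  norm_num
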